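/- Let {a_d}_{d∈ℕ} be a sluggish sequence and p ∈ [1,∞). There exists a constant C₄ (depending on {a_d} and p) such that for every f ∈ S³ and all d ∈ ℕ: ‖G f − G_d f‖_{L^p(ρ_d)} ≤ C₄·(Σ_{i=1}^3 ‖f^{(i)}‖_{∞,1/2})·(a_d/√d + e^{−a_d²/p}), where G f is interpreted as a function on ℝ^d through the first coordinate. -/

import Mathlib

open MeasureTheory ProbabilityTheory Filter Set

noncomputable section

/-- The exponentially-weighted sup-norm `‖g‖_{∞,s} = sup_x e^{-s|x|} |g x|`. -/
def normIS (g : ℝ → ℝ) (s : ℝ) : ℝ := ⨆ x : ℝ, Real.exp (-(s * |x|)) * |g x|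

/-- Membership in the space `Sⁿ`: `n`-times continuously differentiable with all
iterated derivatives up to order `n` of sub-exponential growth. -/
def MemS (n : ℕ) (g : ℝ → ℝ) : Prop :=
  ContDiff ℝ n g ∧ ∀ s > (0:ℝ), ∀ i ≤ n,
    BddAbove (Set.range fun x => Real.exp (-(s * |x|)) * |iteratedDeriv i g x|)

/-- A positive sequence is sluggish if it tends to infinity but `a d / √(log d)` stays bounded. -/
def Sluggish (a : ℕ → ℝ) : Prop :=
  (∀ d, 0 < a d) ∧ Tendsto a atTop atTop ∧
    ∃ M : ℝ, ∀ d : ℕ, 2 ≤ d → a d / Real.sqrt (Real.log d) ≤ M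

/-- `(log ρ)'` -/
def dl (ρ : ℝ → ℝ) : ℝ → ℝ := deriv fun x => Real.log (ρ x)

/-- `(log ρ)''` -/
def d2l (ρ : ℝ → ℝ) : ℝ → ℝ := deriv (dl ρ)

/-- `ρ(g) = ∫ g dρ` -/
def rhoE (ρ g : ℝ → ℝ) : ℝ := ∫ x, g x * ρ x

/-- `J = ρ(((log ρ)')²)` -/
def Jc (ρ : ℝ → ℝ) : ℝ := rhoE ρ fun x => (dl ρ x) ^ 2

/-- super-exponential tails: `(x/|x|)·(log ρ)'(x) → -∞` as `|x| → ∞`. -/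
def SuperExpTails (ρ : ℝ → ℝ) : Prop :=
  Tendsto (dl ρ) atTop atBot ∧ Tendsto (dl ρ) atBot atTop

/-- standard normal CDF -/
def stdCDF (t : ℝ) : ℝ := ((gaussianReal 0 1) (Set.Iic t)).toReal

/-- the constant `h(l) = 2l²Φ(-l√J/2)` -/
def hc (ρ : ℝ → ℝ) (l : ℝ) : ℝ := 2 * l ^ 2 * stdCDF (-(l * Real.sqrt (Jc ρ)) / 2)

/-- the limiting (Langevin) generator `G f = (h(l)/2)(f'' + (log ρ)' f')` -/
def Gop (ρ : ℝ → ℝ) (l : ℝ) (f : ℝ → ℝ) (x : ℝ) : ℝ :=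
  hc ρ l / 2 * (deriv (deriv f) x + dl ρ x * deriv f x)

/-- the product measure `ρ_d` on `ℝ^d` -/
def pm (ρ : ℝ → ℝ) (d : ℕ) : Measure (Fin d → ℝ) :=
  Measure.pi fun _ => volume.withDensity fun x => ENNReal.ofReal (ρ x)

/-- law of the proposal `Y ~ N(x, l²/d · I_d)` -/
def gaussPi (l : ℝ) (d : ℕ) (x : Fin d → ℝ) : Measure (Fin d → ℝ) :=
  Measure.pi fun i => gaussianReal (x i) ((l ^ 2 / (d:ℝ)).toNNReal)

/-- the RWM generator `G_d` -/
def Gd (ρ : ℝ → ℝ) (l : ℝ) (d : ℕ) [NeZero d] (f : ℝ → ℝ) (x : Fin d → ℝ) : ℝ :=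
  (d:ℝ) * ∫ y, (f (y 0) - f (x 0)) * min 1 ((∏ i, ρ (y i)) / ∏ i, ρ (x i)) ∂(gaussPi l d x)

/-- the set `A` associated with the constant `c_A` -/
def Aset (ρ : ℝ → ℝ) (c : ℝ) : Set ℝ :=
  {x | |d2l ρ x| < (dl ρ x) ^ 2 ∧ 1 / c < |dl ρ x| ∧ |dl ρ x| < c}

/-- indices `2,…,d` (all coordinates except the first) -/
def restIdx (d : ℕ) : Finset (Fin d) := Finset.univ.filter fun i => (i : ℕ) ≠ 0

/-- the typical sets `𝒜_d` -/
def Ad (ρ : ℝ → ℝ) (c : ℝ) (a : ℕ → ℝ) (d : ℕ) : Set (Fin d → ℝ) :=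
  {x | (1 / ((d : ℝ) - 1)) * ∑ i ∈ restIdx d, Real.exp |x i| < 2 * rhoE ρ (fun t => Real.exp |t|)
    ∧ (∫ t in Aset ρ c, ρ t) / 2 <
        (1 / ((d : ℝ) - 1)) * ∑ i ∈ restIdx d, (Aset ρ c).indicator (fun _ => (1:ℝ)) (x i)
    ∧ (1 / ((d : ℝ) - 1)) * |∑ i ∈ restIdx d, ((dl ρ (x i)) ^ 2 - Jc ρ)| <
        a d / Real.sqrt d * Real.sqrt (3 * rhoE ρ fun t => ((dl ρ t) ^ 2 - Jc ρ) ^ 2)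
    ∧ (1 / ((d : ℝ) - 1)) * |∑ i ∈ restIdx d, (d2l ρ (x i) + Jc ρ)| <
        a d / Real.sqrt d * Real.sqrt (3 * rhoE ρ fun t => (d2l ρ t + Jc ρ) ^ 2)}

/-- `K(x,y)` -/
def Kf (ρ : ℝ → ℝ) (c : ℝ) (x y : ℝ) : ℝ :=
  dl ρ x * (y - x) + d2l ρ x / 2 * (y - x) ^ 2
    + (dl ρ x) ^ 3 * (Aset ρ c).indicator (fun _ => (1:ℝ)) x / 3 * (y - x) ^ 3

/-- `Σ_{i=2}^d K(x_i, Y_i)` -/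
def SK (ρ : ℝ → ℝ) (c : ℝ) (d : ℕ) (x Y : Fin d → ℝ) : ℝ :=
  ∑ i ∈ restIdx d, Kf ρ c (x i) (Y i)

/-- `β(x,y)` -/
def betaF (ρ : ℝ → ℝ) (c l : ℝ) (d : ℕ) [NeZero d] (x : Fin d → ℝ) (y : ℝ) : ℝ :=
  ∫ Y, min 1 (Real.exp (dl ρ (x 0) * (y - x 0) + SK ρ c d x Y)) ∂(gaussPi l d x)

/-- `G̃_d` -/
def tGd (ρ : ℝ → ℝ) (c l : ℝ) (d : ℕ) [NeZero d] (f : ℝ → ℝ) (x : Fin d → ℝ) : ℝ :=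
  (d:ℝ) * ∫ y, (f y - f (x 0)) * betaF ρ c l d x y
    ∂(gaussianReal (x 0) ((l ^ 2 / (d:ℝ)).toNNReal))

/-- `Ĝ_d` -/
def hGd (ρ : ℝ → ℝ) (c l : ℝ) (d : ℕ) [NeZero d] (f : ℝ → ℝ) (x : Fin d → ℝ) : ℝ :=
  l ^ 2 / 2 * deriv (deriv f) (x 0) * (∫ Y, min 1 (Real.exp (SK ρ c d x Y)) ∂(gaussPi l d x))
    + l ^ 2 * deriv f (x 0) * dl ρ (x 0) *
      (∫ Y, (Set.Iio (0:ℝ)).indicator Real.exp (SK ρ c d x Y) ∂(gaussPi l d x))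

/-- `𝒩(x,Y)` -/
def Nf (ρ : ℝ → ℝ) (l : ℝ) (d : ℕ) (x Y : Fin d → ℝ) : ℝ :=
  l ^ 2 / (2 * (d:ℝ)) * ∑ i ∈ restIdx d, d2l ρ (x i)
    + ∑ i ∈ restIdx d, dl ρ (x i) * (Y i - x i)

/-- `Ğ_d` -/
def bGd (ρ : ℝ → ℝ) (l : ℝ) (d : ℕ) [NeZero d] (f : ℝ → ℝ) (x : Fin d → ℝ) : ℝ :=
  l ^ 2 / 2 * deriv (deriv f) (x 0) * (∫ Y, min 1 (Real.exp (Nf ρ l d x Y)) ∂(gaussPi l d x))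
    + l ^ 2 * deriv f (x 0) * dl ρ (x 0) *
      (∫ Y, (Set.Iio (0:ℝ)).indicator Real.exp (Nf ρ l d x Y) ∂(gaussPi l d x))

/-!
Write `L = log ρ` and `W = ∑ i, (L (y i) - L (x i))` for the log acceptance ratio (`lar`), and let
`v = l² / d` be the proposal variance. A sluggish sequence is bounded below by a positive constant,
so it is enough to bound the `L^p` error by a multiple of `1 / √d`; the exponential term on the
right-hand side is only discarded. No typical sets are needed: the error is estimated pointwise, by
a random variable all of whose moments are bounded in `d` after division by `√v`.

*Normal approximation* (`clt_bound`). For a continuous `k` with `|k| ≤ 1`, solve Stein's equation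
`l² J g' - (t + l² J / 2) g = k - E k(N)`, where `N` has law `N(-l² J / 2, l² J)`; `g` and `g'` are
bounded by a constant that does not depend on `k`. Expand the factor `W` in `W g(W)` to second order
at `x` and integrate the Gaussian factors by parts (`ibp_one`, `ibp_two`). The main terms of
`E k(W) - E k(N)` are then `g'` and `g` averages multiplied by the empirical means of
`L'(x i)² - J` and `L''(x i) + J`, and the remainder is of order `√v` times the empirical mean of
`exp (2 |x i|)`. The sum of these three quantities is `errQ`.

*Generator* (`gen_bound`, `gen_bound_min`). With the acceptance function `min 1 (exp ·)` replaced by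
a differentiable `B` with `|B|, |B'| ≤ 1`, a second-order expansion of `f` in the first coordinate
followed by the same integrations by parts gives
`d E[(f(y₁) - f(x₁)) B(W)] = l² f'(x₁) L'(x₁) E B'(W) + (l² / 2) f''(x₁) E B(W) + O(√v)`, and
`clt_bound` replaces `W` by `N` in both expectations, since it uses only the sup norm of its test
function. The bound does not depend on `B`, so `B_n(s) = (1 + e^{-ns})^{-1/n}` may be inserted and
`n` sent to infinity by dominated convergence. Both limiting expectations are explicit:
`E min(1, e^N) = 2 Φ(-l √J / 2)` and `E[e^N; N < 0] = Φ(-l √J / 2)`, which yields the limiting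
generator.

*Moments* (`iid_moment`, `error_moment`). The super-exponential tails give `ρ` all exponential
moments, and integration by parts gives `E L'² = -E L'' = J > 0` (`fisher`). Thus the first two parts
of `errQ` are averages of i.i.d. centred variables with all moments, whose even moments are of the
Gaussian order in `d`, and the third is bounded by Jensen's inequality. The `L^p` bound follows.
-/

/-! ### Gaussian moments and integration by parts -/

lemma gaussianReal_eq_map_std (x : ℝ) (v : NNReal) :
    gaussianReal x v = (gaussianReal 0 1).map (fun z => x + Real.sqrt v * z) := by
  have h1 : (gaussianReal 0 1).map (fun z => Real.sqrt v * z) = gaussianReal 0 v := by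
    rw [gaussianReal_map_const_mul]
    congr 1
    · simp
    · ext; simp
  have h2 : (fun z : ℝ => x + Real.sqrt v * z) =
      (fun y => x + y) ∘ (fun z => Real.sqrt v * z) := rfl
  rw [h2, ← Measure.map_map (by fun_prop) (by fun_prop), h1, gaussianReal_map_const_add]
  simp

lemma integrable_pow_mul_exp_abs_std (n : ℕ) (c : ℝ) :
    Integrable (fun z : ℝ => |z| ^ n * Real.exp (c * |z|)) (gaussianReal 0 1) := by
  have h1 := integrable_exp_mul_gaussianReal (μ := 0) (v := 1) (|c| + 1)
  have h2 := integrable_exp_mul_gaussianReal (μ := 0) (v := 1) (-(|c| + 1))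
  refine ((h1.add h2).const_mul (n.factorial : ℝ)).mono' (by fun_prop) (ae_of_all _ fun z => ?_)
  have hz := abs_nonneg z
  have e1 : |z| ^ n ≤ n.factorial * Real.exp |z| := by
    have := Real.pow_div_factorial_le_exp (x := |z|) hz n
    rwa [div_le_iff₀' (by positivity)] at this
  have e2 : Real.exp |z| * Real.exp (c * |z|) ≤ Real.exp ((|c| + 1) * |z|) := by
    rw [← Real.exp_add]
    apply Real.exp_le_exp.2
    nlinarith [le_abs_self c]
  have e3 : Real.exp ((|c| + 1) * |z|)
      ≤ Real.exp ((|c| + 1) * z) + Real.exp (-(|c| + 1) * z) := by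
    rcases abs_cases z with h | h <;> rw [h.1]
    · linarith [Real.exp_pos (-(|c| + 1) * z)]
    · have : (|c| + 1) * -z = -(|c| + 1) * z := by ring
      rw [this]; linarith [Real.exp_pos ((|c| + 1) * z)]
  rw [Real.norm_of_nonneg (by positivity)]
  calc |z| ^ n * Real.exp (c * |z|) ≤ n.factorial * Real.exp |z| * Real.exp (c * |z|) := by gcongr
    _ = n.factorial * (Real.exp |z| * Real.exp (c * |z|)) := by ring
    _ ≤ n.factorial * (Real.exp ((|c| + 1) * z) + Real.exp (-(|c| + 1) * z)) := by
        gcongr; exact e2.trans e3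

/-- Absolute moments of a centred Gaussian scale like powers of the standard deviation, even with
an exponential weight, uniformly over bounded variances. -/
lemma gauss_moment (l : ℝ) (hl : 0 < l) (n : ℕ) :
    ∃ C : ℝ, 0 ≤ C ∧ ∀ (v : NNReal), (v : ℝ) ≤ l ^ 2 → ∀ x : ℝ,
      Integrable (fun y : ℝ => |y - x| ^ n * Real.exp |y - x|) (gaussianReal x v) ∧
      ∫ y, |y - x| ^ n * Real.exp |y - x| ∂(gaussianReal x v) ≤ C * Real.sqrt v ^ n := by
  refine ⟨∫ z, |z| ^ n * Real.exp (l * |z|) ∂(gaussianReal 0 1),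
    integral_nonneg fun z => by positivity, fun v hv x => ?_⟩
  have hs : Real.sqrt v ≤ l := by
    rw [Real.sqrt_le_left hl.le]; exact hv
  have hint := integrable_pow_mul_exp_abs_std n l
  have hpt : ∀ z : ℝ, |x + Real.sqrt v * z - x| ^ n * Real.exp |x + Real.sqrt v * z - x|
      ≤ Real.sqrt v ^ n * (|z| ^ n * Real.exp (l * |z|)) := by
    intro z
    have : |x + Real.sqrt v * z - x| = Real.sqrt v * |z| := by
      rw [add_sub_cancel_left, abs_mul, abs_of_nonneg (Real.sqrt_nonneg _)]
    rw [this, mul_pow, mul_assoc]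
    gcongr
  have hI : Integrable (fun z : ℝ => |x + Real.sqrt v * z - x| ^ n *
      Real.exp |x + Real.sqrt v * z - x|) (gaussianReal 0 1) := by
    refine (hint.const_mul (Real.sqrt v ^ n)).mono' (by fun_prop) (ae_of_all _ fun z => ?_)
    rw [Real.norm_of_nonneg (by positivity)]
    exact hpt z
  rw [gaussianReal_eq_map_std x v]
  refine ⟨(integrable_map_measure (by fun_prop) (by fun_prop)).2 hI, ?_⟩
  rw [integral_map (by fun_prop) (by fun_prop), mul_comm, ← integral_const_mul]
  exact integral_mono hI (hint.const_mul _) hpt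

lemma hasDerivAt_gaussianPDFReal (μ : ℝ) (v : NNReal) (hv : v ≠ 0) (y : ℝ) :
    HasDerivAt (gaussianPDFReal μ v) (-(y - μ) / v * gaussianPDFReal μ v y) y := by
  have hv' : (v : ℝ) ≠ 0 := by exact_mod_cast hv
  unfold gaussianPDFReal
  have h1 : HasDerivAt (fun y : ℝ => -(y - μ) ^ 2 / (2 * v)) (-(y - μ) / v) y := by
    have := ((((hasDerivAt_id y).sub_const μ).pow 2).neg).div_const (2 * (v : ℝ))
    refine this.congr_deriv ?_
    simp only [id]
    field_simp
    norm_num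
    ring
  refine ((h1.exp).const_mul ((Real.sqrt (2 * Real.pi * v))⁻¹)).congr_deriv ?_
  ring

lemma integrable_gaussianReal_iff {f : ℝ → ℝ} {μ : ℝ} {v : NNReal} (hv : v ≠ 0) :
    Integrable f (gaussianReal μ v) ↔ Integrable (fun y => gaussianPDFReal μ v y * f y) := by
  rw [gaussianReal_of_var_ne_zero μ hv]
  unfold gaussianPDF
  rw [integrable_withDensity_iff_integrable_smul' (by fun_prop) (by simp)]
  simp [ENNReal.toReal_ofReal, gaussianPDFReal_nonneg]

/-- Gaussian integration by parts on the line. -/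
lemma gauss_ibp (μ : ℝ) (v : NNReal) (hv : v ≠ 0) (F F' : ℝ → ℝ)
    (hF : ∀ y, HasDerivAt F (F' y) y)
    (h0 : Integrable F (gaussianReal μ v))
    (h1 : Integrable (fun y => (y - μ) * F y) (gaussianReal μ v))
    (h2 : Integrable F' (gaussianReal μ v)) :
    ∫ y, (y - μ) * F y ∂(gaussianReal μ v) = v * ∫ y, F' y ∂(gaussianReal μ v) := by
  have hv' : (v : ℝ) ≠ 0 := by exact_mod_cast hv
  rw [integrable_gaussianReal_iff hv] at h0 h1 h2
  rw [integral_gaussianReal_eq_integral_smul hv, integral_gaussianReal_eq_integral_smul hv]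
  have key := integral_mul_deriv_eq_deriv_mul_of_integrable
    (u := F) (v := gaussianPDFReal μ v) (u' := F')
    (v' := fun y => -(y - μ) / v * gaussianPDFReal μ v y)
    (fun y _ => hF y) (fun y _ => hasDerivAt_gaussianPDFReal μ v hv y)
    (by
      refine (h1.const_mul (-(1 / (v : ℝ)))).congr (ae_of_all _ fun y => ?_)
      simp only [Pi.mul_apply]; ring)
    (h2.congr (ae_of_all _ fun y => by simp [mul_comm]))
    (h0.congr (ae_of_all _ fun y => by simp [mul_comm]))
  have e1 : ∫ y, gaussianPDFReal μ v y • ((y - μ) * F y)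
      = -v * ∫ y, F y * (-(y - μ) / v * gaussianPDFReal μ v y) := by
    rw [← integral_const_mul]
    congr 1; ext y; simp only [smul_eq_mul]; field_simp
  rw [e1, key]
  simp only [smul_eq_mul]
  simp_rw [mul_comm (F' _)]
  ring

/-- Gaussian integration by parts in one coordinate of a product of Gaussians. -/
lemma gauss_ibp_pi {n : ℕ} (x : Fin (n + 1) → ℝ) (v : NNReal) (hv : v ≠ 0) (i : Fin (n + 1))
    (F F' : (Fin (n + 1) → ℝ) → ℝ)
    (hF : ∀ z t, HasDerivAt (fun t => F (i.insertNth t z)) (F' (i.insertNth t z)) t)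
    (h0 : Integrable F (Measure.pi fun j => gaussianReal (x j) v))
    (h1 : Integrable (fun y => (y i - x i) * F y) (Measure.pi fun j => gaussianReal (x j) v))
    (h2 : Integrable F' (Measure.pi fun j => gaussianReal (x j) v)) :
    ∫ y, (y i - x i) * F y ∂(Measure.pi fun j => gaussianReal (x j) v)
      = v * ∫ y, F' y ∂(Measure.pi fun j => gaussianReal (x j) v) := by
  have mp := (measurePreserving_piFinSuccAbove (fun j => gaussianReal (x j) v) i).symm
  have hsymm : ∀ p : ℝ × (Fin n → ℝ),
      (MeasurableEquiv.piFinSuccAbove (fun _ => ℝ) i).symm p = i.insertNth p.1 p.2 := by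
    intro p; rfl
  rw [← mp.integral_comp' (fun y => (y i - x i) * F y), ← mp.integral_comp' F']
  rw [← mp.integrable_comp_emb (MeasurableEquiv.measurableEmbedding _)] at h0 h1 h2
  have e : ∀ (t : ℝ) (z : Fin n → ℝ),
      (MeasurableEquiv.piFinSuccAbove (fun _ => ℝ) i).symm (t, z) i = t := by
    intro t z; rw [hsymm]; simp
  have e1 := integral_prod_symm _ h1
  have e2 := integral_prod_symm _ h2
  simp only [Function.comp_apply] at e1 e2
  rw [e1, e2, ← integral_const_mul]
  apply integral_congr_ae
  filter_upwards [h0.prod_left_ae, h1.prod_left_ae, h2.prod_left_ae] with z a0 a1 a2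
  simp only [Function.comp_apply] at a0 a1 a2 ⊢
  simp only [e] at a1 ⊢
  exact gauss_ibp (x i) v hv _ _ (fun t => hF z t) a0 a1 a2

/-! ### Stein's equation -/

/-- The standard normal density. -/
def sphi (t : ℝ) : ℝ := gaussianPDFReal 0 1 t

lemma sphi_pos (t : ℝ) : 0 < sphi t := gaussianPDFReal_pos 0 1 t one_ne_zero

lemma sphi_eq (t : ℝ) : sphi t = (Real.sqrt (2 * Real.pi))⁻¹ * Real.exp (-t ^ 2 / 2) := by
  simp [sphi, gaussianPDFReal]

lemma sphi_neg (t : ℝ) : sphi (-t) = sphi t := by simp [sphi_eq]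

lemma hasDerivAt_sphi (t : ℝ) : HasDerivAt sphi (-t * sphi t) t := by
  have := hasDerivAt_gaussianPDFReal 0 1 one_ne_zero t
  refine HasDerivAt.congr_deriv (f := sphi) this ?_
  simp [sphi]

lemma continuous_sphi : Continuous sphi :=
  continuous_iff_continuousAt.2 fun t => (hasDerivAt_sphi t).continuousAt

lemma integrable_sphi : Integrable sphi := integrable_gaussianPDFReal 0 1

lemma tendsto_sphi_atTop : Tendsto sphi atTop (nhds 0) := by
  have h : Tendsto (fun t : ℝ => t ^ 2 / 2) atTop atTop :=
    (tendsto_pow_atTop two_ne_zero).atTop_div_const (by norm_num)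
  have h2 := (Real.tendsto_exp_neg_atTop_nhds_zero.comp h).const_mul (Real.sqrt (2 * Real.pi))⁻¹
  rw [mul_zero] at h2
  refine h2.congr fun t => ?_
  simp [sphi_eq, neg_div]

lemma integrable_mul_sphi : Integrable fun t => t * sphi t := by
  have := (integrable_gaussianReal_iff (f := fun t : ℝ => t) (μ := 0) (v := 1) one_ne_zero).1
    (memLp_one_iff_integrable.1 (by
      have := memLp_id_gaussianReal (μ := 0) (v := 1) 1
      rwa [ENNReal.coe_one] at this))
  exact this.congr (ae_of_all _ fun t => by simp [sphi, mul_comm])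

lemma mul_tail_le {s : ℝ} : s * ∫ t in Ioi s, sphi t ≤ sphi s := by
  have h : ∫ t in Ioi s, t * sphi t = sphi s := by
    have := integral_Ioi_of_hasDerivAt_of_tendsto (f := fun t => - sphi t)
      (f' := fun t => t * sphi t) (a := s) (m := 0)
      (continuous_sphi.neg.continuousWithinAt)
      (fun t _ => ((hasDerivAt_sphi t).neg).congr_deriv (by ring))
      integrable_mul_sphi.integrableOn (by simpa using tendsto_sphi_atTop.neg)
    simpa using this
  rw [← h, ← integral_const_mul]
  refine setIntegral_mono_on (integrable_sphi.const_mul s).integrableOn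
    integrable_mul_sphi.integrableOn measurableSet_Ioi fun t ht => ?_
  exact mul_le_mul_of_nonneg_right (le_of_lt ht) (sphi_pos t).le

/-- A crude Mills ratio bound near the origin. -/
lemma tail_le : ∃ C : ℝ, 0 ≤ C ∧ ∀ s : ℝ, 0 ≤ s → ∫ t in Ioi s, sphi t ≤ C * sphi s := by
  refine ⟨max 1 (1 / sphi 1), by positivity, fun s hs => ?_⟩
  rcases le_total 1 s with h | h
  · have h0 : 0 ≤ ∫ t in Ioi s, sphi t := integral_nonneg fun t => (sphi_pos t).le
    have := mul_tail_le (s := s)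
    nlinarith [sphi_pos s, le_max_left 1 (1 / sphi 1)]
  · have h1 : ∫ t in Ioi s, sphi t ≤ 1 := by
      calc ∫ t in Ioi s, sphi t ≤ ∫ t, sphi t :=
            setIntegral_le_integral integrable_sphi (ae_of_all _ fun t => (sphi_pos t).le)
        _ = 1 := integral_gaussianPDFReal_eq_one 0 one_ne_zero
    have h2 : sphi 1 ≤ sphi s := by
      rw [sphi_eq, sphi_eq]
      gcongr
    have h3 : 1 ≤ 1 / sphi 1 * sphi s := by
      rw [div_mul_eq_mul_div, le_div_iff₀ (sphi_pos 1)]; linarith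
    nlinarith [sphi_pos s, le_max_right 1 (1 / sphi 1)]

/-- Bounded solution with bounded derivative of the Stein equation `g' - t g = k - E k(Z)`, with
bounds uniform over continuous test functions `k` with values in `[-1, 1]`. -/
lemma stein_std : ∃ C : ℝ, 0 ≤ C ∧ ∀ k : ℝ → ℝ, Continuous k → (∀ t, |k t| ≤ 1) →
    ∃ g g' : ℝ → ℝ, (∀ t, HasDerivAt g (g' t) t) ∧ (∀ t, |g t| ≤ C) ∧ (∀ t, |g' t| ≤ C) ∧
      ∀ t, g' t - t * g t = k t - ∫ z, k z ∂(gaussianReal 0 1) := by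
  obtain ⟨C, hC, htail⟩ := tail_le
  refine ⟨2 * C + 4, by positivity, fun k hk hk1 => ?_⟩
  set c := ∫ z, k z ∂(gaussianReal 0 1) with hc
  have hkint : Integrable k (gaussianReal 0 1) :=
    (integrable_const (1 : ℝ)).mono' hk.aestronglyMeasurable (ae_of_all _ hk1)
  have hc1 : |c| ≤ 1 := by
    have := norm_integral_le_of_norm_le_const (μ := gaussianReal 0 1) (f := k) (C := 1)
      (ae_of_all _ hk1)
    simpa using this
  set w : ℝ → ℝ := fun t => (k t - c) * sphi t with hw
  have hwc : Continuous w := (hk.sub continuous_const).mul continuous_sphi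
  have hk2 : ∀ t, |k t - c| ≤ 2 := fun t => (abs_sub _ _).trans (by linarith [hk1 t])
  have hwb : ∀ t, |w t| ≤ 2 * sphi t := fun t => by
    rw [hw]; simp only [abs_mul, abs_of_pos (sphi_pos t)]
    exact mul_le_mul_of_nonneg_right (hk2 t) (sphi_pos t).le
  have hwi : Integrable w := (integrable_sphi.const_mul 2).mono' hwc.aestronglyMeasurable
    (ae_of_all _ hwb)
  have hw0 : ∫ t, w t = 0 := by
    have h1 : ∫ t, w t = ∫ z, (k z - c) ∂(gaussianReal 0 1) := by
      rw [integral_gaussianReal_eq_integral_smul one_ne_zero]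
      congr 1; ext t; simp [hw, sphi, mul_comm]
    rw [h1, integral_sub hkint (integrable_const _)]
    simp [hc]
  -- The solution is `H / sphi`. Since `w` has total integral zero, `H s` is also minus the integral
  -- over `Ioi s`, so it can be bounded by the Gaussian tail on whichever side of `0` contains `s`.
  set H : ℝ → ℝ := fun s => ∫ t in Iic s, w t with hH
  have hHd : ∀ s, HasDerivAt H (w s) s := by
    intro s
    have e : H = fun s => (∫ t in Iic 0, w t) + ∫ t in (0:ℝ)..s, w t := by
      ext s
      have := intervalIntegral.integral_Iic_sub_Iic (f := w) (a := 0) (b := s) (μ := volume)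
        hwi.integrableOn hwi.integrableOn
      rw [← this]; simp [hH]
    rw [e]
    exact (intervalIntegral.integral_hasDerivAt_right (hwc.intervalIntegrable _ _)
      hwc.aestronglyMeasurable.stronglyMeasurableAtFilter hwc.continuousAt).const_add _
  have hHpos : ∀ s, |H s| ≤ 2 * ∫ t in Ioi s, sphi t := by
    intro s
    have e : H s = - ∫ t in Ioi s, w t := by
      have := intervalIntegral.integral_Iic_add_Ioi (b := s) (μ := volume)
        hwi.integrableOn hwi.integrableOn
      rw [hw0] at this
      simp only [hH]; linarith
    rw [e, abs_neg, ← integral_const_mul]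
    exact norm_integral_le_of_norm_le (f := w) (integrable_sphi.const_mul 2).integrableOn
      (ae_of_all _ hwb)
  have hHneg : ∀ s, |H s| ≤ 2 * ∫ t in Ioi (-s), sphi t := by
    intro s
    rw [← integral_comp_neg_Iic s sphi, ← integral_const_mul]
    simp_rw [sphi_neg]
    exact norm_integral_le_of_norm_le (f := w) (integrable_sphi.const_mul 2).integrableOn
      (ae_of_all _ hwb)
  have hHb : ∀ s, |H s| ≤ 2 * C * sphi s := by
    intro s
    rcases le_total 0 s with h | h
    · nlinarith [hHpos s, htail s h]
    · have := htail (-s) (by linarith)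
      rw [sphi_neg] at this
      nlinarith [hHneg s]
  have hHb2 : ∀ s, |s * H s| ≤ 2 * sphi s := by
    intro s
    rw [abs_mul]
    rcases le_total 0 s with h | h
    · rw [abs_of_nonneg h]
      nlinarith [hHpos s, mul_tail_le (s := s)]
    · rw [abs_of_nonpos h]
      have := mul_tail_le (s := -s)
      rw [sphi_neg] at this
      nlinarith [hHneg s]
  refine ⟨fun s => H s / sphi s, fun s => (k s - c) + s * (H s / sphi s), fun s => ?_, fun s => ?_,
    fun s => ?_, fun s => by ring⟩
  · have hp := (sphi_pos s).ne'
    refine ((hHd s).div (hasDerivAt_sphi s) hp).congr_deriv ?_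
    simp only [hw]; field_simp; ring
  · rw [abs_div, abs_of_pos (sphi_pos s), div_le_iff₀ (sphi_pos s)]
    nlinarith [hHb s, sphi_pos s]
  · have h1 : |s * (H s / sphi s)| ≤ 2 := by
      rw [← mul_div_assoc, abs_div, abs_of_pos (sphi_pos s), div_le_iff₀ (sphi_pos s)]
      exact hHb2 s
    exact (abs_add_le _ _).trans (by linarith [hk2 s])

/-- Stein's equation for the normal law with mean `m` and variance `v`. -/
lemma stein_gen (m v : ℝ) (hv : 0 < v) :
    ∃ C : ℝ, 0 ≤ C ∧ ∀ k : ℝ → ℝ, Continuous k → (∀ t, |k t| ≤ 1) →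
    ∃ g g' : ℝ → ℝ, (∀ t, HasDerivAt g (g' t) t) ∧ (∀ t, |g t| ≤ C) ∧ (∀ t, |g' t| ≤ C) ∧
      ∀ t, v * g' t - (t - m) * g t
        = k t - ∫ z, k (m + Real.sqrt v * z) ∂(gaussianReal 0 1) := by
  obtain ⟨C, hC, h⟩ := stein_std
  have hs : 0 < Real.sqrt v := Real.sqrt_pos.2 hv
  have hss : Real.sqrt v * Real.sqrt v = v := Real.mul_self_sqrt hv.le
  refine ⟨C / Real.sqrt v + C / v, by positivity, fun k hk hk1 => ?_⟩
  obtain ⟨g, g', hg, hb, hb', he⟩ := h (fun t => k (m + Real.sqrt v * t)) (by fun_prop)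
    (fun t => hk1 _)
  refine ⟨fun t => g ((t - m) / Real.sqrt v) / Real.sqrt v,
    fun t => g' ((t - m) / Real.sqrt v) / v, fun t => ?_, fun t => ?_, fun t => ?_, fun t => ?_⟩
  · have h1 : HasDerivAt (fun t : ℝ => (t - m) / Real.sqrt v) (1 / Real.sqrt v) t :=
      ((hasDerivAt_id t).sub_const m).div_const _
    refine (((hg _).comp t h1).div_const (Real.sqrt v)).congr_deriv ?_
    rw [mul_one_div, div_div, hss]
  · rw [abs_div, abs_of_pos hs]
    have : 0 ≤ C / v := by positivity
    have h2 := div_le_div_of_nonneg_right (hb ((t - m) / Real.sqrt v)) hs.le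
    linarith
  · rw [abs_div, abs_of_pos hv]
    have : 0 ≤ C / Real.sqrt v := by positivity
    have h2 := div_le_div_of_nonneg_right (hb' ((t - m) / Real.sqrt v)) hv.le
    linarith
  · have := he ((t - m) / Real.sqrt v)
    have e : m + Real.sqrt v * ((t - m) / Real.sqrt v) = t := by field_simp; ring
    rw [e] at this
    rw [← this]
    field_simp

/-! ### Taylor estimates with exponential weights -/

lemma grow_step {A x : ℝ} (hA : 0 ≤ A) (n : ℕ) {r r' : ℝ → ℝ}
    (hr : ∀ t, HasDerivAt r (r' t) t) (h0 : r x = 0)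
    (hb : ∀ t, |r' t| ≤ A * (|t - x| ^ n * Real.exp |t - x|)) (t : ℝ) :
    |r t| ≤ A * (|t - x| ^ (n + 1) * Real.exp |t - x|) := by
  have h := Convex.norm_image_sub_le_of_norm_hasDerivWithin_le (f := r) (f' := r') (s := uIcc x t)
    (x := x) (y := t) (C := A * (|t - x| ^ n * Real.exp |t - x|))
    (fun s _ => (hr s).hasDerivWithinAt)
    (fun s hs => by
      have hst : |s - x| ≤ |t - x| := abs_sub_left_of_mem_uIcc hs
      refine (hb s).trans ?_
      gcongr) (convex_uIcc x t) left_mem_uIcc right_mem_uIcc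
  rw [h0, sub_zero, Real.norm_eq_abs, Real.norm_eq_abs] at h
  exact h.trans (le_of_eq (by ring))

lemma exp_abs_le_exp_abs_mul (x t : ℝ) : Real.exp |t| ≤ Real.exp |x| * Real.exp |t - x| := by
  rw [← Real.exp_add]
  apply Real.exp_le_exp.2
  have := abs_add_le x (t - x)
  rwa [add_sub_cancel] at this

lemma taylor_one {K : ℝ} (hK : 0 ≤ K) {r r' : ℝ → ℝ} (hr : ∀ t, HasDerivAt r (r' t) t)
    (hb : ∀ t, |r' t| ≤ K * Real.exp |t|) (x y : ℝ) :
    |r y - r x| ≤ K * Real.exp |x| * (|y - x| ^ 1 * Real.exp |y - x|) := by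
  refine grow_step (r := fun y => r y - r x) (r' := r') (by positivity) 0
    (fun t => (hr t).sub_const _) (by simp) (fun t => (hb t).trans ?_) y
  rw [pow_zero, one_mul, mul_assoc]
  gcongr
  exact exp_abs_le_exp_abs_mul x t

/-- Second-order Taylor expansion for functions whose third derivative is `O(e^{|t|})`. -/
lemma taylor_three {K : ℝ} (hK : 0 ≤ K) {r r1 r2 r3 : ℝ → ℝ} (h0 : ∀ t, HasDerivAt r (r1 t) t)
    (h1 : ∀ t, HasDerivAt r1 (r2 t) t) (h2 : ∀ t, HasDerivAt r2 (r3 t) t)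
    (hb : ∀ t, |r3 t| ≤ K * Real.exp |t|) (x y : ℝ) :
    |r y - r x - r1 x * (y - x) - r2 x / 2 * (y - x) ^ 2|
      ≤ K * Real.exp |x| * (|y - x| ^ 3 * Real.exp |y - x|) := by
  have hid : ∀ t : ℝ, HasDerivAt (fun t => t - x) 1 t := fun t => (hasDerivAt_id t).sub_const x
  have s1 : ∀ t, |r1 t - r1 x - r2 x * (t - x)|
      ≤ K * Real.exp |x| * (|t - x| ^ 2 * Real.exp |t - x|) :=
    grow_step (by positivity) 1
      (fun t => (((h1 t).sub_const (r1 x)).sub ((hid t).const_mul (r2 x))).congr_deriv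
        (by rw [mul_one])) (by simp) (fun t => taylor_one hK h2 hb x t)
  refine grow_step (r := fun y => r y - r x - r1 x * (y - x) - r2 x / 2 * (y - x) ^ 2)
    (by positivity) 2 (fun t => ((((h0 t).sub_const (r x)).sub ((hid t).const_mul (r1 x))).sub
      (((hid t).pow 2).const_mul (r2 x / 2))).congr_deriv (by simp; ring)) (by simp) s1 y

/-! ### Normal approximation of the log acceptance ratio -/

/-- `L` is three times differentiable with derivatives `L1, L2, L3`, all of size `O(e^{|t|})`. -/
structure IsPot (L L1 L2 L3 : ℝ → ℝ) (K : ℝ) : Prop where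
  d0 : ∀ t, HasDerivAt L (L1 t) t
  d1 : ∀ t, HasDerivAt L1 (L2 t) t
  d2 : ∀ t, HasDerivAt L2 (L3 t) t
  b1 : ∀ t, |L1 t| ≤ K * Real.exp |t|
  b2 : ∀ t, |L2 t| ≤ K * Real.exp |t|
  b3 : ∀ t, |L3 t| ≤ K * Real.exp |t|
  hK : 0 ≤ K

lemma measurable_of_hasDerivAt {g g' : ℝ → ℝ} (h : ∀ t, HasDerivAt g (g' t) t) :
    Measurable g ∧ Measurable g' := by
  have e : g' = deriv g := funext fun t => (h t).deriv.symm
  refine ⟨(continuous_iff_continuousAt.2 fun t => (h t).continuousAt).measurable, ?_⟩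
  rw [e]; exact measurable_deriv g

/-- The log acceptance ratio of a move from `x` to `y`. -/
def lar (L : ℝ → ℝ) {d : ℕ} (x y : Fin d → ℝ) : ℝ := ∑ i, (L (y i) - L (x i))

/-- Product of Gaussians with means `x j` and common variance `v`. -/
def gpi {d : ℕ} (x : Fin d → ℝ) (v : NNReal) : Measure (Fin d → ℝ) :=
  Measure.pi fun j => gaussianReal (x j) v

instance {d : ℕ} (x : Fin d → ℝ) (v : NNReal) : IsProbabilityMeasure (gpi x v) := by
  unfold gpi; infer_instance

/-- `M` dominates the first four weighted Gaussian moments for all variances at most `l ^ 2`. -/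
def MomBd (l M : ℝ) : Prop := 0 ≤ M ∧ ∀ n ≤ 3, ∀ v : NNReal, (v : ℝ) ≤ l ^ 2 → ∀ x : ℝ,
  Integrable (fun y : ℝ => |y - x| ^ n * Real.exp |y - x|) (gaussianReal x v) ∧
    ∫ y, |y - x| ^ n * Real.exp |y - x| ∂(gaussianReal x v) ≤ M * Real.sqrt v ^ n

lemma exists_momBd (l : ℝ) (hl : 0 < l) : ∃ M, MomBd l M := by
  choose C hC h using gauss_moment l hl
  refine ⟨∑ n ∈ Finset.range 4, C n, Finset.sum_nonneg fun n _ => hC n, fun n hn v hv x => ?_⟩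
  refine ⟨(h n v hv x).1, (h n v hv x).2.trans ?_⟩
  gcongr
  exact Finset.single_le_sum (fun n _ => hC n) (by simp; omega)

lemma pi_bd {l M : ℝ} (hM : MomBd l M) {v : NNReal} (hv : (v : ℝ) ≤ l ^ 2) {d : ℕ}
    (x : Fin d → ℝ) (i : Fin d) (n : ℕ) (hn : n ≤ 3) (D : ℝ) {h : (Fin d → ℝ) → ℝ}
    (hm : Measurable h) (hb : ∀ y, |h y| ≤ D * (|y i - x i| ^ n * Real.exp |y i - x i|))
    (hD : 0 ≤ D) :
    Integrable h (gpi x v) ∧ |∫ y, h y ∂(gpi x v)| ≤ D * (M * Real.sqrt v ^ n) := by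
  obtain ⟨h1, h2⟩ := hM.2 n hn v hv (x i)
  have mp := measurePreserving_eval (fun j => gaussianReal (x j) v) i
  have hI : Integrable (fun y : Fin d → ℝ => |y i - x i| ^ n * Real.exp |y i - x i|) (gpi x v) :=
    (mp.integrable_comp h1.aestronglyMeasurable).2 h1
  have hE : ∫ y, |y i - x i| ^ n * Real.exp |y i - x i| ∂(gpi x v)
      = ∫ y, |y - x i| ^ n * Real.exp |y - x i| ∂(gaussianReal (x i) v) := by
    rw [← mp.map_eq, integral_map mp.measurable.aemeasurable (by fun_prop)]
    rfl
  refine ⟨(hI.const_mul D).mono' hm.aestronglyMeasurable (ae_of_all _ hb), ?_⟩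
  refine (norm_integral_le_of_norm_le (f := h) (hI.const_mul D) (ae_of_all _ hb)).trans ?_
  rw [integral_const_mul, hE]
  gcongr

section
variable {L L1 L2 L3 : ℝ → ℝ} {K : ℝ}

lemma IsPot.meas (hL : IsPot L L1 L2 L3 K) :
    Measurable L ∧ Measurable L1 ∧ Measurable L2 ∧ Measurable L3 :=
  ⟨(measurable_of_hasDerivAt hL.d0).1, (measurable_of_hasDerivAt hL.d0).2,
    (measurable_of_hasDerivAt hL.d1).2, (measurable_of_hasDerivAt hL.d2).2⟩

lemma IsPot.meas_lar (hL : IsPot L L1 L2 L3 K) {d : ℕ} (x : Fin d → ℝ) :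
    Measurable (lar L x) := by
  have := hL.meas.1
  unfold lar
  fun_prop

lemma IsPot.b1' (hL : IsPot L L1 L2 L3 K) (x y : ℝ) :
    |L1 y| ≤ K * Real.exp |x| * Real.exp |y - x| := by
  refine (hL.b1 y).trans ?_
  rw [mul_assoc]
  exact mul_le_mul_of_nonneg_left (exp_abs_le_exp_abs_mul x y) hL.hK

/-- Derivative of the log acceptance ratio in one coordinate of the proposal. -/
lemma IsPot.hasDerivAt_lar (hL : IsPot L L1 L2 L3 K) {n : ℕ} (x : Fin (n + 1) → ℝ)
    (i : Fin (n + 1)) (z : Fin n → ℝ) (t : ℝ) :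
    HasDerivAt (fun t : ℝ => lar L x (i.insertNth t z : Fin (n + 1) → ℝ)) (L1 t) t := by
  unfold lar
  simp only [Fin.sum_univ_succAbove _ i, Fin.insertNth_apply_same, Fin.insertNth_apply_succAbove]
  exact ((hL.d0 t).sub_const _).add_const _

/-- First integration by parts against a function of the log acceptance ratio. -/
lemma ibp_one (hL : IsPot L L1 L2 L3 K) {l M : ℝ} (hM : MomBd l M) {v : NNReal}
    (hv : (v : ℝ) ≤ l ^ 2) (hv0 : v ≠ 0) {d : ℕ} (x : Fin d → ℝ) (i : Fin d)
    {g g' : ℝ → ℝ} {C : ℝ} (hg : ∀ t, HasDerivAt g (g' t) t) (hC : 0 ≤ C) (hb : ∀ t, |g t| ≤ C)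
    (hb' : ∀ t, |g' t| ≤ C) :
    ∫ y, (y i - x i) * g (lar L x y) ∂(gpi x v)
      = v * ∫ y, g' (lar L x y) * L1 (y i) ∂(gpi x v) := by
  obtain _ | n := d
  · exact i.elim0
  obtain ⟨mg, mg'⟩ := measurable_of_hasDerivAt hg
  have mW := hL.meas_lar x
  have m1 := hL.meas.2.1
  have hK := hL.hK
  refine gauss_ibp_pi x v hv0 i (fun y => g (lar L x y)) (fun y => g' (lar L x y) * L1 (y i))
    (fun z t => ?_) ?_ ?_ ?_
  · simp only [Fin.insertNth_apply_same]
    exact (hg _).comp t (hL.hasDerivAt_lar x i z t)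
  · refine (pi_bd hM hv x i 0 (by norm_num) C (by fun_prop) (fun y => ?_) hC).1
    rw [pow_zero, one_mul]
    exact (hb _).trans (le_mul_of_one_le_right hC (Real.one_le_exp (abs_nonneg _)))
  · refine (pi_bd hM hv x i 1 (by norm_num) C (by fun_prop) (fun y => ?_) hC).1
    rw [abs_mul, pow_one, mul_comm]
    have := Real.one_le_exp (abs_nonneg (y i - x i))
    exact mul_le_mul (hb _) (le_mul_of_one_le_right (abs_nonneg _) this) (abs_nonneg _) hC
  · refine (pi_bd hM hv x i 0 (by norm_num) (C * (K * Real.exp |x i|)) (by fun_prop)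
      (fun y => ?_) (by positivity)).1
    rw [abs_mul, pow_zero, one_mul, mul_assoc]
    exact mul_le_mul (hb' _) (hL.b1' _ _) (abs_nonneg _) hC

/-- Second integration by parts: the square of a centred coordinate is replaced by its variance. -/
lemma ibp_two (hL : IsPot L L1 L2 L3 K) {l M : ℝ} (hM : MomBd l M) {v : NNReal}
    (hv : (v : ℝ) ≤ l ^ 2) (hv0 : v ≠ 0) {d : ℕ} (x : Fin d → ℝ) (i : Fin d)
    {g g' : ℝ → ℝ} {C : ℝ} (hg : ∀ t, HasDerivAt g (g' t) t) (hC : 0 ≤ C) (hb : ∀ t, |g t| ≤ C)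
    (hb' : ∀ t, |g' t| ≤ C) :
    ∫ y, (y i - x i) ^ 2 * g (lar L x y) ∂(gpi x v)
      = v * (∫ y, g (lar L x y) ∂(gpi x v)
        + ∫ y, (y i - x i) * (g' (lar L x y) * L1 (y i)) ∂(gpi x v)) := by
  obtain _ | n := d
  · exact i.elim0
  obtain ⟨mg, mg'⟩ := measurable_of_hasDerivAt hg
  have mW := hL.meas_lar x
  have m1 := hL.meas.2.1
  have hK := hL.hK
  have i0 : Integrable (fun y => g (lar L x y)) (gpi x v) := by
    refine (pi_bd hM hv x i 0 (by norm_num) C (by fun_prop) (fun y => ?_) hC).1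
    rw [pow_zero, one_mul]
    exact (hb _).trans (le_mul_of_one_le_right hC (Real.one_le_exp (abs_nonneg _)))
  have i1 : Integrable (fun y => (y i - x i) * (g' (lar L x y) * L1 (y i))) (gpi x v) := by
    refine (pi_bd hM hv x i 1 (by norm_num) (C * (K * Real.exp |x i|)) (by fun_prop)
      (fun y => ?_) (by positivity)).1
    rw [abs_mul, abs_mul, pow_one]
    calc |y i - x i| * (|g' (lar L x y)| * |L1 (y i)|)
        ≤ |y i - x i| * (C * (K * Real.exp |x i| * Real.exp |y i - x i|)) := by
          gcongr
          · exact hb' _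
          · exact hL.b1' _ _
      _ = _ := by ring
  rw [← integral_add i0 i1]
  simp_rw [pow_two, mul_assoc]
  refine gauss_ibp_pi x v hv0 i (fun y => (y i - x i) * g (lar L x y))
    (fun y => g (lar L x y) + (y i - x i) * (g' (lar L x y) * L1 (y i)))
    (fun z t => ?_) ?_ ?_ (i0.add i1)
  · simp only [Fin.insertNth_apply_same]
    have h1 : HasDerivAt (fun t : ℝ => t - x i) 1 t := (hasDerivAt_id t).sub_const _
    refine (h1.mul ((hg _).comp t (hL.hasDerivAt_lar x i z t))).congr_deriv ?_
    simp [Function.comp]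
  · refine (pi_bd hM hv x i 1 (by norm_num) C (by fun_prop) (fun y => ?_) hC).1
    rw [abs_mul, pow_one, mul_comm]
    have := Real.one_le_exp (abs_nonneg (y i - x i))
    exact mul_le_mul (hb _) (le_mul_of_one_le_right (abs_nonneg _) this) (abs_nonneg _) hC
  · refine (pi_bd hM hv x i 2 (by norm_num) C (by fun_prop) (fun y => ?_) hC).1
    rw [← mul_assoc, abs_mul, abs_mul, ← pow_two, mul_comm]
    have := Real.one_le_exp (abs_nonneg (y i - x i))
    exact mul_le_mul (hb _) (le_mul_of_one_le_right (by positivity) this) (by positivity) hC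

end

section
variable {L L1 L2 L3 : ℝ → ℝ} {K : ℝ}

/-- The random error of the normal approximation at `x`: two empirical averages that are centred
when `J = E L1 ^ 2 = - E L2`, and a term of the order of the proposal standard deviation. -/
def errQ (L1 L2 : ℝ → ℝ) (J s : ℝ) {d : ℕ} (x : Fin d → ℝ) : ℝ :=
  |1 / (d : ℝ) * ∑ i, (L1 (x i) ^ 2 - J)| + |1 / (d : ℝ) * ∑ i, (L2 (x i) + J)|
    + s * (1 / (d : ℝ) * ∑ i, Real.exp (2 * |x i|))

set_option maxHeartbeats 1000000 in
/-- Total-variation type comparison of the log acceptance ratio with the normal law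
`N(-l²J/2, l²J)`: only `sup |k|` enters the bound. The linear part of the log acceptance ratio is
Gaussian, so Stein's equation and Gaussian integration by parts leave only empirical averages. -/
lemma clt_bound (hL : IsPot L L1 L2 L3 K) {l M J : ℝ} (hl : 0 < l) (hJ : 0 < J)
    (hM : MomBd l M) :
    ∃ C : ℝ, 0 ≤ C ∧ ∀ (d : ℕ) (_ : d ≠ 0) (v : NNReal), (v : ℝ) = l ^ 2 / d → ∀ x : Fin d → ℝ,
      ∀ k : ℝ → ℝ, Continuous k → (∀ t, |k t| ≤ 1) →
      |∫ y, k (lar L x y) ∂(gpi x v)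
        - ∫ z, k (-(l ^ 2 * J) / 2 + Real.sqrt (l ^ 2 * J) * z) ∂(gaussianReal 0 1)|
        ≤ C * errQ L1 L2 J (Real.sqrt v) x := by
  obtain ⟨C, hC, hst⟩ := stein_gen (-(l ^ 2 * J) / 2) (l ^ 2 * J) (by positivity)
  have hK := hL.hK
  have hM0 := hM.1
  refine ⟨C * l ^ 2 + C * M * l ^ 2 * (2 * K ^ 2 + K), by positivity,
    fun d hd v hvd x k hk hk1 => ?_⟩
  obtain ⟨g, g', hg, hb, hb', he⟩ := hst k hk hk1
  have hd0 : (0 : ℝ) < d := by exact_mod_cast Nat.pos_of_ne_zero hd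
  have hd1 : (1 : ℝ) ≤ d := by exact_mod_cast Nat.pos_of_ne_zero hd
  have hv : (v : ℝ) ≤ l ^ 2 := by rw [hvd]; exact div_le_self (by positivity) hd1
  have hvpos : (0 : ℝ) < v := by rw [hvd]; positivity
  have hv0 : v ≠ 0 := by
    rintro rfl; simp at hvpos
  set s := Real.sqrt v with hs
  have hs0 : 0 ≤ s := Real.sqrt_nonneg _
  have hss : s ^ 2 = v := Real.sq_sqrt hvpos.le
  set c := ∫ z, k (-(l ^ 2 * J) / 2 + Real.sqrt (l ^ 2 * J) * z) ∂(gaussianReal 0 1) with hc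
  obtain ⟨mg, mg'⟩ := measurable_of_hasDerivAt hg
  obtain ⟨mL, m1, m2, m3⟩ := hL.meas
  have mW := hL.meas_lar x
  set W := lar L x with hW
  -- Third-order Taylor remainder of coordinate `i` of the log acceptance ratio.
  set R : Fin d → (Fin d → ℝ) → ℝ := fun i y =>
    L (y i) - L (x i) - L1 (x i) * (y i - x i) - L2 (x i) / 2 * (y i - x i) ^ 2 with hR
  have mR : ∀ i, Measurable (R i) := fun i => by simp only [hR]; fun_prop
  have ige : ∀ i (y : Fin d → ℝ), 1 ≤ Real.exp |y i - x i| :=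
    fun i y => Real.one_le_exp (abs_nonneg _)
  -- integrability and size of every term that occurs
  have I0 : Integrable (fun y => g (W y)) (gpi x v) :=
    (integrable_const C).mono' (mg.comp mW).aestronglyMeasurable (ae_of_all _ fun y => hb _)
  have I0' : Integrable (fun y => g' (W y)) (gpi x v) :=
    (integrable_const C).mono' (mg'.comp mW).aestronglyMeasurable (ae_of_all _ fun y => hb' _)
  have I1 : ∀ i, Integrable (fun y => (y i - x i) * g (W y)) (gpi x v) := fun i => by
    refine (pi_bd hM hv x i 1 (by norm_num) C (by fun_prop) (fun y => ?_) hC).1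
    rw [abs_mul, pow_one, mul_comm]
    exact mul_le_mul (hb _) (le_mul_of_one_le_right (abs_nonneg _) (ige i y)) (abs_nonneg _) hC
  have I2 : ∀ i, Integrable (fun y => (y i - x i) ^ 2 * g (W y)) (gpi x v) := fun i => by
    refine (pi_bd hM hv x i 2 (by norm_num) C (by fun_prop) (fun y => ?_) hC).1
    rw [abs_mul, abs_pow, mul_comm]
    exact mul_le_mul (hb _) (le_mul_of_one_le_right (by positivity) (ige i y)) (by positivity) hC
  have I3 : ∀ i, Integrable (fun y => R i y * g (W y)) (gpi x v) ∧
      |∫ y, R i y * g (W y) ∂(gpi x v)| ≤ C * (K * Real.exp |x i|) * (M * s ^ 3) := fun i => by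
    have := mR i
    refine pi_bd hM hv x i 3 (by norm_num) (C * (K * Real.exp |x i|)) (by fun_prop)
      (fun y => ?_) (by positivity)
    rw [abs_mul, mul_comm, mul_assoc C]
    exact mul_le_mul (hb _) (taylor_three hK hL.d0 hL.d1 hL.d2 hL.b3 (x i) (y i))
      (abs_nonneg _) hC
  have IA : ∀ i, Integrable (fun y => g' (W y) * (L1 (y i) - L1 (x i))) (gpi x v) ∧
      |∫ y, g' (W y) * (L1 (y i) - L1 (x i)) ∂(gpi x v)|
        ≤ C * (K * Real.exp |x i|) * (M * s ^ 1) := fun i => by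
    refine pi_bd hM hv x i 1 (by norm_num) (C * (K * Real.exp |x i|)) (by fun_prop)
      (fun y => ?_) (by positivity)
    rw [abs_mul, mul_assoc C]
    exact mul_le_mul (hb' _) (taylor_one hK hL.d1 hL.b2 (x i) (y i)) (abs_nonneg _) hC
  have IB : ∀ i, |∫ y, (y i - x i) * (g' (W y) * L1 (y i)) ∂(gpi x v)|
        ≤ C * (K * Real.exp |x i|) * (M * s ^ 1) := fun i => by
    refine (pi_bd hM hv x i 1 (by norm_num) (C * (K * Real.exp |x i|)) (by fun_prop)
      (fun y => ?_) (by positivity)).2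
    rw [abs_mul, abs_mul, pow_one]
    calc |y i - x i| * (|g' (W y)| * |L1 (y i)|)
        ≤ |y i - x i| * (C * (K * Real.exp |x i| * Real.exp |y i - x i|)) := by
          gcongr
          · exact hb' _
          · exact hL.b1' _ _
      _ = _ := by ring
  set eg := ∫ y, g (W y) ∂(gpi x v) with heg
  set eg' := ∫ y, g' (W y) ∂(gpi x v) with heg'
  set A : Fin d → ℝ := fun i => ∫ y, g' (W y) * (L1 (y i) - L1 (x i)) ∂(gpi x v) with hA
  set B : Fin d → ℝ := fun i => ∫ y, (y i - x i) * (g' (W y) * L1 (y i)) ∂(gpi x v) with hB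
  set T : Fin d → ℝ := fun i => ∫ y, R i y * g (W y) ∂(gpi x v) with hT
  have E1 : ∀ i, ∫ y, (y i - x i) * g (W y) ∂(gpi x v) = v * (L1 (x i) * eg' + A i) := fun i => by
    rw [ibp_one hL hM hv hv0 x i hg hC hb hb']
    have e : ∀ y : Fin d → ℝ, g' (W y) * L1 (y i)
        = L1 (x i) * g' (W y) + g' (W y) * (L1 (y i) - L1 (x i)) := fun y => by ring
    change v * ∫ y, g' (W y) * L1 (y i) ∂(gpi x v) = _
    rw [integral_congr_ae (ae_of_all _ e), integral_add (I0'.const_mul _) (IA i).1,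
      integral_const_mul]
  have E2 : ∀ i, ∫ y, (y i - x i) ^ 2 * g (W y) ∂(gpi x v) = v * (eg + B i) := fun i =>
    ibp_two hL hM hv hv0 x i hg hC hb hb'
  have hpt : ∀ y, k (W y) - c = (l ^ 2 * J * g' (W y) + -(l ^ 2 * J) / 2 * g (W y))
      - ∑ i, (L1 (x i) * ((y i - x i) * g (W y)) + L2 (x i) / 2 * ((y i - x i) ^ 2 * g (W y))
        + R i y * g (W y)) := by
    -- Stein's equation at `W y`, with the factor `W y` itself Taylor expanded at `x`
    intro y
    rw [← he (W y)]
    have : ∑ i, (L1 (x i) * ((y i - x i) * g (W y)) + L2 (x i) / 2 * ((y i - x i) ^ 2 * g (W y))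
        + R i y * g (W y)) = W y * g (W y) := by
      rw [hW, lar, Finset.sum_mul]
      refine Finset.sum_congr rfl fun i _ => ?_
      simp only [hR]; ring
    rw [this]; ring
  have hkc : ∫ y, k (W y) ∂(gpi x v) - c
      = (l ^ 2 * J * eg' + -(l ^ 2 * J) / 2 * eg)
        - ∑ i, (L1 (x i) * (v * (L1 (x i) * eg' + A i)) + L2 (x i) / 2 * (v * (eg + B i))
          + T i) := by
    have mk := hk.measurable
    have hkint : Integrable (fun y => k (W y)) (gpi x v) :=
      (integrable_const (1 : ℝ)).mono' (mk.comp mW).aestronglyMeasurable (ae_of_all _ fun y => hk1 _)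
    have Is : ∀ i, Integrable (fun y => L1 (x i) * ((y i - x i) * g (W y))
        + L2 (x i) / 2 * ((y i - x i) ^ 2 * g (W y)) + R i y * g (W y)) (gpi x v) := fun i =>
      (((I1 i).const_mul _).add ((I2 i).const_mul _)).add (I3 i).1
    have h1 : ∫ y, k (W y) ∂(gpi x v) - c = ∫ y, (k (W y) - c) ∂(gpi x v) := by
      rw [integral_sub hkint (integrable_const _)]; simp
    rw [h1]
    simp_rw [hpt]
    have Ig : Integrable (fun y => l ^ 2 * J * g' (W y) + -(l ^ 2 * J) / 2 * g (W y))
        (gpi x v) := (I0'.const_mul _).add (I0.const_mul _)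
    have I12 : ∀ i, Integrable (fun y => L1 (x i) * ((y i - x i) * g (W y))
        + L2 (x i) / 2 * ((y i - x i) ^ 2 * g (W y))) (gpi x v) := fun i =>
      ((I1 i).const_mul _).add ((I2 i).const_mul _)
    rw [integral_sub Ig (integrable_finsetSum _ fun i _ => Is i),
      integral_add (I0'.const_mul _) (I0.const_mul _), integral_const_mul, integral_const_mul,
      integral_finsetSum _ fun i _ => Is i]
    congr 1
    refine Finset.sum_congr rfl fun i _ => ?_
    rw [integral_add (I12 i) (I3 i).1,
      integral_add ((I1 i).const_mul _) ((I2 i).const_mul _), integral_const_mul,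
      integral_const_mul, E1, E2]
  -- As `v = l ^ 2 / d`, the main terms become the two empirical averages in `errQ`.
  have hrew : ∫ y, k (W y) ∂(gpi x v) - c
      = - (l ^ 2 * eg') * (1 / (d : ℝ) * ∑ i, (L1 (x i) ^ 2 - J))
        - l ^ 2 / 2 * eg * (1 / (d : ℝ) * ∑ i, (L2 (x i) + J))
        - ∑ i, (v * (L1 (x i) * A i) + v * (L2 (x i) / 2 * B i) + T i) := by
    have s1 : ∑ i, (L1 (x i) ^ 2 - J) = ∑ i, L1 (x i) ^ 2 - d * J := by
      simp [Finset.sum_sub_distrib]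
    have s2 : ∑ i, (L2 (x i) + J) = ∑ i, L2 (x i) + d * J := by
      simp [Finset.sum_add_distrib]
    have : ∑ i, (L1 (x i) * (v * (L1 (x i) * eg' + A i)) + L2 (x i) / 2 * (v * (eg + B i)) + T i)
        = v * eg' * ∑ i, L1 (x i) ^ 2 + v / 2 * eg * ∑ i, L2 (x i)
          + ∑ i, (v * (L1 (x i) * A i) + v * (L2 (x i) / 2 * B i) + T i) := by
      rw [Finset.mul_sum, Finset.mul_sum, ← Finset.sum_add_distrib, ← Finset.sum_add_distrib]
      refine Finset.sum_congr rfl fun i _ => ?_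
      ring
    rw [hkc, this, s1, s2, hvd]
    field_simp
    ring
  have hegb : |eg| ≤ C := by
    have := norm_integral_le_of_norm_le_const (μ := gpi x v) (f := fun y => g (W y)) (C := C)
      (ae_of_all _ fun y => hb _)
    simpa using this
  have hegb' : |eg'| ≤ C := by
    have := norm_integral_le_of_norm_le_const (μ := gpi x v) (f := fun y => g' (W y)) (C := C)
      (ae_of_all _ fun y => hb' _)
    simpa using this
  have hterm : ∀ i, |v * (L1 (x i) * A i) + v * (L2 (x i) / 2 * B i) + T i|
      ≤ v * s * (C * M * (2 * K ^ 2 + K)) * Real.exp (2 * |x i|) := by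
    intro i
    have ee : Real.exp (2 * |x i|) = Real.exp |x i| * Real.exp |x i| := by
      rw [← Real.exp_add]; congr 1; ring
    have e1 : 1 ≤ Real.exp |x i| := Real.one_le_exp (abs_nonneg _)
    set e := Real.exp |x i| with hedef
    have e0 : 0 < e := Real.exp_pos _
    have t1 : |v * (L1 (x i) * A i)| ≤ v * ((K * e) * (C * (K * e) * (M * s ^ 1))) := by
      rw [abs_mul, abs_mul, abs_of_pos hvpos]
      gcongr
      · exact hL.b1 _
      · exact (IA i).2
    have t2 : |v * (L2 (x i) / 2 * B i)| ≤ v * ((K * e) * (C * (K * e) * (M * s ^ 1))) := by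
      rw [abs_mul, abs_mul, abs_of_pos hvpos]
      gcongr
      · rw [abs_div, abs_two]
        linarith [hL.b2 (x i), abs_nonneg (L2 (x i))]
      · exact IB i
    have t3 : |T i| ≤ v * s * (C * M * K) * (e * e) := by
      refine (I3 i).2.trans ?_
      have : C * (K * e) * (M * s ^ 3) = v * s * (C * M * K) * e := by rw [← hss]; ring
      rw [this]
      exact mul_le_mul_of_nonneg_left (le_mul_of_one_le_right e0.le e1) (by positivity)
    calc _ ≤ |v * (L1 (x i) * A i)| + |v * (L2 (x i) / 2 * B i)| + |T i| := abs_add_three _ _ _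
      _ ≤ _ := add_le_add (add_le_add t1 t2) t3
      _ = _ := by rw [ee]; ring
  have hsum : |∑ i, (v * (L1 (x i) * A i) + v * (L2 (x i) / 2 * B i) + T i)|
      ≤ C * M * l ^ 2 * (2 * K ^ 2 + K) * (s * (1 / (d : ℝ) * ∑ i, Real.exp (2 * |x i|))) := by
    refine (Finset.abs_sum_le_sum_abs _ _).trans ((Finset.sum_le_sum fun i _ => hterm i).trans ?_)
    rw [← Finset.mul_sum, hvd]
    exact le_of_eq (by ring)
  rw [hrew]
  set U1 := 1 / (d : ℝ) * ∑ i, (L1 (x i) ^ 2 - J)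
  set U2 := 1 / (d : ℝ) * ∑ i, (L2 (x i) + J)
  set V := s * (1 / (d : ℝ) * ∑ i, Real.exp (2 * |x i|)) with hV
  have hV0 : 0 ≤ V := by positivity
  have q1 : |-(l ^ 2 * eg') * U1| ≤ C * l ^ 2 * |U1| := by
    rw [abs_mul, abs_neg, abs_mul, abs_of_nonneg (by positivity : 0 ≤ l ^ 2)]
    have : l ^ 2 * |eg'| ≤ C * l ^ 2 := by nlinarith [sq_nonneg l]
    exact mul_le_mul_of_nonneg_right this (abs_nonneg _)
  have q2 : |l ^ 2 / 2 * eg * U2| ≤ C * l ^ 2 * |U2| := by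
    rw [abs_mul, abs_mul, abs_of_nonneg (by positivity : 0 ≤ l ^ 2 / 2)]
    have : l ^ 2 / 2 * |eg| ≤ C * l ^ 2 := by
      nlinarith [sq_nonneg l, mul_nonneg (sq_nonneg l) hC]
    exact mul_le_mul_of_nonneg_right this (abs_nonneg _)
  set S := ∑ i, (v * (L1 (x i) * A i) + v * (L2 (x i) / 2 * B i) + T i)
  have tri : |-(l ^ 2 * eg') * U1 - l ^ 2 / 2 * eg * U2 - S|
      ≤ |-(l ^ 2 * eg') * U1| + |l ^ 2 / 2 * eg * U2| + |S| :=
    (abs_sub _ _).trans (add_le_add (abs_sub _ _) le_rfl)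
  refine tri.trans ((add_le_add (add_le_add q1 q2) hsum).trans ?_)
  unfold errQ
  have z1 : 0 ≤ C * l ^ 2 := by positivity
  have z2 : 0 ≤ C * M * l ^ 2 * (2 * K ^ 2 + K) := by positivity
  rw [← hV]
  nlinarith [mul_nonneg z2 (abs_nonneg U1), mul_nonneg z2 (abs_nonneg U2), mul_nonneg z1 hV0]

end

/-! ### The generator estimate for smooth acceptance functions -/

section
variable {L L1 L2 L3 : ℝ → ℝ} {K : ℝ}

lemma errQ_nonneg (J : ℝ) {s : ℝ} (hs : 0 ≤ s) {d : ℕ} (x : Fin d → ℝ) :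
    0 ≤ errQ L1 L2 J s x := by
  unfold errQ; positivity

set_option maxHeartbeats 1000000 in
/-- The generator estimate with the acceptance function `min 1 (exp ·)` replaced by a smooth `B`.
The bound does not depend on `B`, so that it survives the passage to the limit. -/
lemma gen_bound (hL : IsPot L L1 L2 L3 K) {l M J : ℝ} (hl : 0 < l) (hJ : 0 < J)
    (hM : MomBd l M) :
    ∃ C : ℝ, 0 ≤ C ∧ ∀ (d : ℕ) (i : Fin d) (v : NNReal), (v : ℝ) = l ^ 2 / d → ∀ x : Fin d → ℝ,
      ∀ (f f1 f2 f3 : ℝ → ℝ) (F : ℝ), 0 ≤ F → (∀ t, HasDerivAt f (f1 t) t) →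
      (∀ t, HasDerivAt f1 (f2 t) t) → (∀ t, HasDerivAt f2 (f3 t) t) →
      (∀ t, |f1 t| ≤ F * Real.exp |t|) → (∀ t, |f2 t| ≤ F * Real.exp |t|) →
      (∀ t, |f3 t| ≤ F * Real.exp |t|) →
      ∀ B B' : ℝ → ℝ, (∀ t, HasDerivAt B (B' t) t) → Continuous B' → (∀ t, |B t| ≤ 1) →
      (∀ t, |B' t| ≤ 1) →
      |d * ∫ y, (f (y i) - f (x i)) * B (lar L x y) ∂(gpi x v)
        - (l ^ 2 * f1 (x i) * L1 (x i)
            * ∫ z, B' (-(l ^ 2 * J) / 2 + Real.sqrt (l ^ 2 * J) * z) ∂(gaussianReal 0 1)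
          + l ^ 2 / 2 * f2 (x i)
            * ∫ z, B (-(l ^ 2 * J) / 2 + Real.sqrt (l ^ 2 * J) * z) ∂(gaussianReal 0 1))|
        ≤ C * F * (Real.exp (2 * |x i|) * (errQ L1 L2 J (Real.sqrt v) x + Real.sqrt v)) := by
  obtain ⟨C, hC, hclt⟩ := clt_bound hL hl hJ hM
  have hK := hL.hK
  have hM0 := hM.1
  refine ⟨l ^ 2 * (2 * K * M + M) + l ^ 2 * (K + 1) * C, by positivity,
    fun d i v hvd x f f1 f2 f3 F hF h0 h1 h2 b1 b2 b3 B B' hB hB'c hB1 hB'1 => ?_⟩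
  have hd : d ≠ 0 := by rintro rfl; exact i.elim0
  have hd0 : (0 : ℝ) < d := by exact_mod_cast Nat.pos_of_ne_zero hd
  have hd1 : (1 : ℝ) ≤ d := by exact_mod_cast Nat.pos_of_ne_zero hd
  have hv : (v : ℝ) ≤ l ^ 2 := by rw [hvd]; exact div_le_self (by positivity) hd1
  have hvpos : (0 : ℝ) < v := by rw [hvd]; positivity
  have hv0 : v ≠ 0 := by
    rintro rfl; simp at hvpos
  have hdv : d * (v : ℝ) = l ^ 2 := by rw [hvd]; field_simp
  have hBc : Continuous B := continuous_iff_continuousAt.2 fun t => (hB t).continuousAt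
  have c1 := hclt d hd v hvd x B hBc hB1
  have c2 := hclt d hd v hvd x B' hB'c hB'1
  set s := Real.sqrt v with hs
  have hs0 : 0 ≤ s := Real.sqrt_nonneg _
  have hss : s ^ 2 = v := Real.sq_sqrt hvpos.le
  have hQ : 0 ≤ errQ L1 L2 J s x := errQ_nonneg J hs0 x
  set Q := errQ L1 L2 J s x
  set ν := ∫ z, B (-(l ^ 2 * J) / 2 + Real.sqrt (l ^ 2 * J) * z) ∂(gaussianReal 0 1)
  set ν' := ∫ z, B' (-(l ^ 2 * J) / 2 + Real.sqrt (l ^ 2 * J) * z) ∂(gaussianReal 0 1)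
  have mB := hBc.measurable
  have mB' := hB'c.measurable
  obtain ⟨mL, m1, m2, m3⟩ := hL.meas
  have mf := (measurable_of_hasDerivAt h0).1
  have mW := hL.meas_lar x
  set W := lar L x with hW
  set R : (Fin d → ℝ) → ℝ := fun y =>
    f (y i) - f (x i) - f1 (x i) * (y i - x i) - f2 (x i) / 2 * (y i - x i) ^ 2 with hR
  have mR : Measurable R := by simp only [hR]; fun_prop
  have ige : ∀ (y : Fin d → ℝ), 1 ≤ Real.exp |y i - x i| :=
    fun y => Real.one_le_exp (abs_nonneg _)
  set e := Real.exp |x i| with he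
  have e0 : 0 < e := Real.exp_pos _
  have e1 : 1 ≤ e := Real.one_le_exp (abs_nonneg _)
  have I0' : Integrable (fun y => B' (W y)) (gpi x v) :=
    (integrable_const (1 : ℝ)).mono' (mB'.comp mW).aestronglyMeasurable
      (ae_of_all _ fun y => hB'1 _)
  have I1 : Integrable (fun y => (y i - x i) * B (W y)) (gpi x v) := by
    refine (pi_bd hM hv x i 1 (by norm_num) 1 (by fun_prop) (fun y => ?_) zero_le_one).1
    rw [abs_mul, pow_one, mul_comm]
    exact mul_le_mul (hB1 _) (le_mul_of_one_le_right (abs_nonneg _) (ige y)) (abs_nonneg _)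
      zero_le_one
  have I2 : Integrable (fun y => (y i - x i) ^ 2 * B (W y)) (gpi x v) := by
    refine (pi_bd hM hv x i 2 (by norm_num) 1 (by fun_prop) (fun y => ?_) zero_le_one).1
    rw [abs_mul, abs_pow, mul_comm]
    exact mul_le_mul (hB1 _) (le_mul_of_one_le_right (by positivity) (ige y)) (by positivity)
      zero_le_one
  obtain ⟨I3, hT⟩ : Integrable (fun y => R y * B (W y)) (gpi x v) ∧
      |∫ y, R y * B (W y) ∂(gpi x v)| ≤ F * e * (M * s ^ 3) := by
    refine pi_bd hM hv x i 3 (by norm_num) (F * e) (by fun_prop) (fun y => ?_) (by positivity)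
    rw [abs_mul]
    exact (mul_le_of_le_one_right (abs_nonneg _) (hB1 _)).trans
      (taylor_three hF h0 h1 h2 b3 (x i) (y i))
  obtain ⟨IA, hA⟩ : Integrable (fun y => B' (W y) * (L1 (y i) - L1 (x i))) (gpi x v) ∧
      |∫ y, B' (W y) * (L1 (y i) - L1 (x i)) ∂(gpi x v)| ≤ K * e * (M * s ^ 1) := by
    refine pi_bd hM hv x i 1 (by norm_num) (K * e) (by fun_prop) (fun y => ?_) (by positivity)
    rw [abs_mul]
    exact (mul_le_of_le_one_left (abs_nonneg _) (hB'1 _)).trans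
      (taylor_one hK hL.d1 hL.b2 (x i) (y i))
  have hBt : |∫ y, (y i - x i) * (B' (W y) * L1 (y i)) ∂(gpi x v)| ≤ K * e * (M * s ^ 1) := by
    refine (pi_bd hM hv x i 1 (by norm_num) (K * e) (by fun_prop)
      (fun y => ?_) (by positivity)).2
    rw [abs_mul, abs_mul, pow_one]
    calc |y i - x i| * (|B' (W y)| * |L1 (y i)|)
        ≤ |y i - x i| * (1 * (K * e * Real.exp |y i - x i|)) := by
          gcongr
          · exact hB'1 _
          · exact hL.b1' _ _
      _ = _ := by ring
  set A := ∫ y, B' (W y) * (L1 (y i) - L1 (x i)) ∂(gpi x v)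
  set D := ∫ y, (y i - x i) * (B' (W y) * L1 (y i)) ∂(gpi x v)
  set T := ∫ y, R y * B (W y) ∂(gpi x v)
  set η := ∫ y, B (W y) ∂(gpi x v)
  set η' := ∫ y, B' (W y) ∂(gpi x v)
  have E1 : ∫ y, (y i - x i) * B (W y) ∂(gpi x v) = v * (L1 (x i) * η' + A) := by
    rw [ibp_one hL hM hv hv0 x i hB zero_le_one hB1 hB'1]
    have e : ∀ y : Fin d → ℝ, B' (W y) * L1 (y i)
        = L1 (x i) * B' (W y) + B' (W y) * (L1 (y i) - L1 (x i)) := fun y => by ring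
    change v * ∫ y, B' (W y) * L1 (y i) ∂(gpi x v) = _
    rw [integral_congr_ae (ae_of_all _ e), integral_add (I0'.const_mul _) IA, integral_const_mul]
  have E2 : ∫ y, (y i - x i) ^ 2 * B (W y) ∂(gpi x v) = v * (η + D) :=
    ibp_two hL hM hv hv0 x i hB zero_le_one hB1 hB'1
  have E : ∫ y, (f (y i) - f (x i)) * B (W y) ∂(gpi x v)
      = f1 (x i) * (v * (L1 (x i) * η' + A)) + f2 (x i) / 2 * (v * (η + D)) + T := by
    have e : ∀ y : Fin d → ℝ, (f (y i) - f (x i)) * B (W y)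
        = (f1 (x i) * ((y i - x i) * B (W y)) + f2 (x i) / 2 * ((y i - x i) ^ 2 * B (W y)))
          + R y * B (W y) := fun y => by simp only [hR]; ring
    have I12 : Integrable (fun y => f1 (x i) * ((y i - x i) * B (W y))
        + f2 (x i) / 2 * ((y i - x i) ^ 2 * B (W y))) (gpi x v) :=
      (I1.const_mul _).add (I2.const_mul _)
    rw [integral_congr_ae (ae_of_all _ e), integral_add I12 I3,
      integral_add (I1.const_mul _) (I2.const_mul _), integral_const_mul, integral_const_mul,
      E1, E2]
  -- The differences `η - ν` and `η' - ν'` are covered by `clt_bound`, because `B` and `B'` are both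
  -- bounded by `1`; no smoothness of `B'` is needed.
  have split : d * ∫ y, (f (y i) - f (x i)) * B (W y) ∂(gpi x v)
        - (l ^ 2 * f1 (x i) * L1 (x i) * ν' + l ^ 2 / 2 * f2 (x i) * ν)
      = l ^ 2 * (f1 (x i) * (L1 (x i) * (η' - ν'))) + l ^ 2 * (f2 (x i) / 2 * (η - ν))
        + (l ^ 2 * (f1 (x i) * A) + l ^ 2 * (f2 (x i) / 2 * D) + d * T) := by
    rw [E, ← hdv]; ring
  have hf2 : |f2 (x i) / 2| ≤ F * e := by
    rw [abs_div, abs_two]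
    linarith [b2 (x i), abs_nonneg (f2 (x i))]
  have l2 : |l ^ 2| = l ^ 2 := abs_of_nonneg (by positivity)
  have t1 : |l ^ 2 * (f1 (x i) * (L1 (x i) * (η' - ν')))|
      ≤ l ^ 2 * ((F * e) * ((K * e) * (C * Q))) := by
    rw [abs_mul, abs_mul, abs_mul, l2]
    gcongr
    · exact b1 _
    · exact hL.b1 _
  have t2 : |l ^ 2 * (f2 (x i) / 2 * (η - ν))| ≤ l ^ 2 * ((F * e) * (C * Q)) := by
    rw [abs_mul, abs_mul, l2]
    gcongr
  have t3 : |l ^ 2 * (f1 (x i) * A)| ≤ l ^ 2 * ((F * e) * (K * e * (M * s ^ 1))) := by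
    rw [abs_mul, abs_mul, l2]
    gcongr
    exact b1 _
  have t4 : |l ^ 2 * (f2 (x i) / 2 * D)| ≤ l ^ 2 * ((F * e) * (K * e * (M * s ^ 1))) := by
    rw [abs_mul, abs_mul, l2]
    gcongr
  have t5 : |d * T| ≤ l ^ 2 * (F * e * (M * s)) := by
    rw [abs_mul, abs_of_pos hd0]
    refine (mul_le_mul_of_nonneg_left hT hd0.le).trans (le_of_eq ?_)
    rw [← hdv, ← hss]; ring
  have ee : Real.exp (2 * |x i|) = e * e := by
    rw [he, ← Real.exp_add]; congr 1; ring
  have le2 : ∀ z, 0 ≤ z → e * z ≤ e * e * z := fun z hz => by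
    rw [mul_assoc]; exact le_mul_of_one_le_left (by positivity) e1
  rw [split, ee]
  calc _ ≤ (|l ^ 2 * (f1 (x i) * (L1 (x i) * (η' - ν')))| + |l ^ 2 * (f2 (x i) / 2 * (η - ν))|)
        + (|l ^ 2 * (f1 (x i) * A)| + |l ^ 2 * (f2 (x i) / 2 * D)| + |d * T|) :=
        (abs_add_le _ _).trans (add_le_add (abs_add_le _ _) (abs_add_three _ _ _))
    _ ≤ (l ^ 2 * ((F * e) * ((K * e) * (C * Q))) + l ^ 2 * ((F * e) * (C * Q)))
        + (l ^ 2 * ((F * e) * (K * e * (M * s ^ 1))) + l ^ 2 * ((F * e) * (K * e * (M * s ^ 1)))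
          + l ^ 2 * (F * e * (M * s))) := by gcongr
    _ = e * e * (l ^ 2 * K * C * F * Q + l ^ 2 * (2 * K * M) * F * s)
        + e * (l ^ 2 * C * F * Q + l ^ 2 * M * F * s) := by ring
    _ ≤ e * e * (l ^ 2 * K * C * F * Q + l ^ 2 * (2 * K * M) * F * s)
        + e * e * (l ^ 2 * C * F * Q + l ^ 2 * M * F * s) := by
        exact add_le_add le_rfl (le2 _ (by positivity))
    _ = e * e * F * (l ^ 2 * (K + 1) * C * Q + l ^ 2 * (2 * K * M + M) * s) := by ring
    _ ≤ e * e * F * ((l ^ 2 * (2 * K * M + M) + l ^ 2 * (K + 1) * C) * (Q + s)) := by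
        gcongr
        have z1 : 0 ≤ l ^ 2 * (2 * K * M + M) * Q := by positivity
        have z2 : 0 ≤ l ^ 2 * (K + 1) * C * s := by positivity
        nlinarith
    _ = _ := by ring

end

/-! ### The Metropolis acceptance function as a limit of smooth functions -/

/-- Smooth approximation `(1 + e^{-ns})^{-1/n}` of `min 1 (e^s)`. -/
def smB (n : ℕ) (s : ℝ) : ℝ := Real.exp (-(1 / (n : ℝ)) * Real.log (1 + Real.exp (-(n * s))))

/-- Derivative of `smB n`. -/
def smB' (n : ℕ) (s : ℝ) : ℝ := smB n s * (1 / (1 + Real.exp (n * s)))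

/-- Derivative of `s ↦ min 1 (e^s)` away from `0`. -/
def acc' (s : ℝ) : ℝ := (Iio (0 : ℝ)).indicator Real.exp s

lemma hasDerivAt_smB {n : ℕ} (hn : n ≠ 0) (s : ℝ) : HasDerivAt (smB n) (smB' n s) s := by
  have hn' : (n : ℝ) ≠ 0 := by exact_mod_cast hn
  have p : (0 : ℝ) < 1 + Real.exp (-(n * s)) := by positivity
  have h1 : HasDerivAt (fun s : ℝ => -((n : ℝ) * s)) (-n) s := by
    exact ((hasDerivAt_id s).const_mul (n : ℝ)).neg.congr_deriv (by ring)
  have h2 := (((h1.exp.const_add 1).log p.ne').const_mul (-(1 / (n : ℝ)))).exp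
  refine h2.congr_deriv ?_
  unfold smB' smB
  have : Real.exp (n * s) = (Real.exp (-(n * s)))⁻¹ := by rw [Real.exp_neg, inv_inv]
  rw [this]
  field_simp
  ring

lemma smB_mem (n : ℕ) (s : ℝ) : 0 ≤ smB n s ∧ smB n s ≤ 1 := by
  refine ⟨(Real.exp_pos _).le, Real.exp_le_one_iff.2 ?_⟩
  have : 0 ≤ Real.log (1 + Real.exp (-(n * s))) :=
    Real.log_nonneg (by linarith [Real.exp_pos (-(n * s))])
  have h2 : (0 : ℝ) ≤ 1 / n := by positivity
  nlinarith

lemma abs_smB_le (n : ℕ) (s : ℝ) : |smB n s| ≤ 1 := by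
  rw [abs_of_nonneg (smB_mem n s).1]; exact (smB_mem n s).2

lemma abs_smB'_le (n : ℕ) (s : ℝ) : |smB' n s| ≤ 1 := by
  have h : 1 / (1 + Real.exp (n * s)) ≤ 1 := by
    rw [div_le_one (by positivity)]; linarith [Real.exp_pos (n * s)]
  unfold smB'
  rw [abs_mul, abs_of_nonneg (by positivity : (0 : ℝ) ≤ 1 / (1 + Real.exp (n * s)))]
  exact mul_le_one₀ (abs_smB_le n s) (by positivity) h

lemma continuous_smB' {n : ℕ} : Continuous (smB' n) := by
  unfold smB' smB
  refine ((continuous_const.mul (Continuous.log (by fun_prop) fun s => ?_)).rexp).mul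
    (continuous_const.div (by fun_prop) fun s => ?_)
  · positivity
  · positivity

lemma tendsto_smB (s : ℝ) : Tendsto (fun n => smB n s) atTop (nhds (min 1 (Real.exp s))) := by
  have hlim : Tendsto (fun n : ℕ => -(1 / (n : ℝ)) * Real.log (1 + Real.exp (-(n * s))))
      atTop (nhds (min 0 s)) := by
    have key : ∀ n : ℕ, n ≠ 0 → -(1 / (n : ℝ)) * Real.log (1 + Real.exp (-(n * s)))
        = min 0 s - 1 / (n : ℝ) * Real.log (1 + Real.exp (-(n * |s|))) := by
      intro n hn
      have hn' : (n : ℝ) ≠ 0 := by exact_mod_cast hn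
      rcases le_total 0 s with h | h
      · rw [min_eq_left h, abs_of_nonneg h]; ring
      · rw [min_eq_right h, abs_of_nonpos h]
        have : 1 + Real.exp (-(n * s)) = Real.exp (-(n * s)) * (1 + Real.exp (-(n * -s))) := by
          rw [mul_add, ← Real.exp_add]; simp [add_comm]
        rw [this, Real.log_mul (Real.exp_pos _).ne' (by positivity), Real.log_exp]
        field_simp
        ring
    have hz : Tendsto (fun n : ℕ => 1 / (n : ℝ) * Real.log (1 + Real.exp (-(n * |s|)))) atTop
        (nhds 0) := by
      have u : Tendsto (fun n : ℕ => 1 / (n : ℝ) * Real.log 2) atTop (nhds 0) := by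
        simpa using (tendsto_one_div_atTop_nhds_zero_nat (𝕜 := ℝ)).mul_const (Real.log 2)
      refine squeeze_zero (fun n => ?_) (fun n => ?_) u
      · have := Real.log_nonneg (by linarith [Real.exp_pos (-(n * |s|))] :
          (1 : ℝ) ≤ 1 + Real.exp (-(n * |s|)))
        positivity
      · have : Real.exp (-(n * |s|)) ≤ 1 := Real.exp_le_one_iff.2 (by
          have : 0 ≤ (n : ℝ) * |s| := by positivity
          linarith)
        gcongr
        linarith
    have := (tendsto_const_nhds (x := min 0 s)).sub hz
    rw [sub_zero] at this
    refine this.congr' ?_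
    filter_upwards [eventually_ne_atTop 0] with n hn
    exact (key n hn).symm
  have := (Real.continuous_exp.tendsto _).comp hlim
  rw [Real.exp_monotone.map_min, Real.exp_zero] at this
  exact this

lemma tendsto_smB' {s : ℝ} (hs : s ≠ 0) :
    Tendsto (fun n => smB' n s) atTop (nhds (acc' s)) := by
  have hc : Tendsto (fun n : ℕ => (n : ℝ)) atTop atTop := tendsto_natCast_atTop_atTop
  unfold smB' acc'
  rcases lt_or_gt_of_ne hs with h | h
  · have e : Tendsto (fun n : ℕ => 1 / (1 + Real.exp (n * s))) atTop (nhds (1 / (1 + 0))) := by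
      refine tendsto_const_nhds.div (tendsto_const_nhds.add ?_) (by norm_num)
      exact Real.tendsto_exp_atBot.comp (hc.atTop_mul_const_of_neg h)
    have := (tendsto_smB s).mul e
    rwa [min_eq_right (Real.exp_le_one_iff.2 h.le), add_zero, div_one, mul_one,
      ← indicator_of_mem (show s ∈ Iio (0 : ℝ) from h) Real.exp] at this
  · have e : Tendsto (fun n : ℕ => 1 / (1 + Real.exp (n * s))) atTop (nhds 0) := by
      refine tendsto_const_nhds.div_atTop (tendsto_atTop_add_const_left _ _ ?_)
      exact Real.tendsto_exp_atTop.comp (hc.atTop_mul_const h)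
    have := (tendsto_smB s).mul e
    rwa [mul_zero, ← indicator_of_notMem (show s ∉ Iio (0 : ℝ) from not_lt.2 h.le) Real.exp]
      at this

/-! ### The acceptance rate of the limiting Gaussian -/

lemma exp_mul_sphi (t z : ℝ) : Real.exp (-t ^ 2 / 2 + t * z) * sphi z = sphi (z - t) := by
  rw [sphi_eq, sphi_eq, mul_left_comm, ← Real.exp_add]
  congr 2
  ring

lemma integral_std (k : ℝ → ℝ) : ∫ z, k z ∂(gaussianReal 0 1) = ∫ z, sphi z * k z := by
  rw [integral_gaussianReal_eq_integral_smul one_ne_zero]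
  rfl

lemma stdCDF_eq (t : ℝ) : stdCDF t = ∫ z, (Iio t).indicator sphi z := by
  have : NullSingletonClass (gaussianReal 0 1) :=
    nullSingletonClass_gaussianReal one_ne_zero
  have h : stdCDF t = ∫ z, (Iio t).indicator (fun _ => (1 : ℝ)) z ∂(gaussianReal 0 1) := by
    rw [integral_indicator measurableSet_Iio, setIntegral_const, smul_eq_mul, mul_one]
    unfold stdCDF
    rw [← measureReal_def, measureReal_congr Iio_ae_eq_Iic]
  rw [h, integral_std]
  refine integral_congr_ae (ae_of_all _ fun z => ?_)
  by_cases hz : z ∈ Iio t <;> simp [hz]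

lemma integral_acc' {t : ℝ} (ht : 0 < t) :
    ∫ z, acc' (-t ^ 2 / 2 + t * z) ∂(gaussianReal 0 1) = stdCDF (-t / 2) := by
  rw [integral_std, stdCDF_eq,
    ← integral_sub_right_eq_self ((Iio (-t / 2)).indicator sphi) t]
  refine integral_congr_ae (ae_of_all _ fun z => ?_)
  simp only [acc']
  by_cases hz : z < t / 2
  · rw [indicator_of_mem (show -t ^ 2 / 2 + t * z ∈ Iio (0 : ℝ) by
      simp only [mem_Iio]; nlinarith), indicator_of_mem (show z - t ∈ Iio (-t / 2) by
      simp only [mem_Iio]; linarith), mul_comm, exp_mul_sphi]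
  · rw [indicator_of_notMem (show -t ^ 2 / 2 + t * z ∉ Iio (0 : ℝ) by
      simp only [mem_Iio]; nlinarith), indicator_of_notMem (show z - t ∉ Iio (-t / 2) by
      simp only [mem_Iio]; linarith), mul_zero]

lemma integral_acc {t : ℝ} (ht : 0 < t) :
    ∫ z, min 1 (Real.exp (-t ^ 2 / 2 + t * z)) ∂(gaussianReal 0 1) = 2 * stdCDF (-t / 2) := by
  have e : ∀ z : ℝ, sphi z * min 1 (Real.exp (-t ^ 2 / 2 + t * z))
      = (Iio (-t / 2)).indicator sphi (z - t) + (Iic (-t / 2)).indicator sphi (-z) := by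
    intro z
    by_cases hz : z < t / 2
    · rw [indicator_of_mem (show z - t ∈ Iio (-t / 2) by simp only [mem_Iio]; linarith),
        indicator_of_notMem (show -z ∉ Iic (-t / 2) by simp only [mem_Iic]; linarith),
        min_eq_right (Real.exp_le_one_iff.2 (by nlinarith)), mul_comm, exp_mul_sphi, add_zero]
    · rw [indicator_of_notMem (show z - t ∉ Iio (-t / 2) by simp only [mem_Iio]; linarith),
        indicator_of_mem (show -z ∈ Iic (-t / 2) by simp only [mem_Iic]; linarith),
        min_eq_left (Real.one_le_exp (by nlinarith)), sphi_neg, zero_add, mul_one]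
  have i1 : Integrable ((Iio (-t / 2)).indicator sphi) :=
    integrable_sphi.indicator measurableSet_Iio
  have i2 : Integrable ((Iic (-t / 2)).indicator sphi) :=
    integrable_sphi.indicator measurableSet_Iic
  rw [integral_std, integral_congr_ae (ae_of_all _ e),
    integral_add (i1.comp_sub_right t) i2.comp_neg, integral_sub_right_eq_self,
    integral_neg_eq_self, two_mul, stdCDF_eq]
  congr 1
  exact integral_congr_ae (indicator_ae_eq_of_ae_eq_set Iio_ae_eq_Iic.symm)

section
variable {L L1 L2 L3 : ℝ → ℝ} {K : ℝ}

/-- The generator estimate for the Metropolis acceptance function, by dominated convergence. -/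
lemma gen_bound_min (hL : IsPot L L1 L2 L3 K) {l M J : ℝ} (hl : 0 < l) (hJ : 0 < J)
    (hM : MomBd l M) :
    ∃ C : ℝ, 0 ≤ C ∧ ∀ (d : ℕ) (i : Fin d) (v : NNReal), (v : ℝ) = l ^ 2 / d → ∀ x : Fin d → ℝ,
      ∀ (f f1 f2 f3 : ℝ → ℝ) (F : ℝ), 0 ≤ F → (∀ t, HasDerivAt f (f1 t) t) →
      (∀ t, HasDerivAt f1 (f2 t) t) → (∀ t, HasDerivAt f2 (f3 t) t) →
      (∀ t, |f1 t| ≤ F * Real.exp |t|) → (∀ t, |f2 t| ≤ F * Real.exp |t|) →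
      (∀ t, |f3 t| ≤ F * Real.exp |t|) →
      |d * ∫ y, (f (y i) - f (x i)) * min 1 (Real.exp (lar L x y)) ∂(gpi x v)
        - l ^ 2 * stdCDF (-(l * Real.sqrt J) / 2) * (f2 (x i) + L1 (x i) * f1 (x i))|
        ≤ C * F * (Real.exp (2 * |x i|) * (errQ L1 L2 J (Real.sqrt v) x + Real.sqrt v)) := by
  obtain ⟨C, hC, h⟩ := gen_bound hL hl hJ hM
  refine ⟨C, hC, fun d i v hvd x f f1 f2 f3 F hF h0 h1 h2 b1 b2 b3 => ?_⟩
  have hd1 : (1 : ℝ) ≤ d := by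
    have : d ≠ 0 := by rintro rfl; exact i.elim0
    exact_mod_cast Nat.pos_of_ne_zero this
  have hv : (v : ℝ) ≤ l ^ 2 := by rw [hvd]; exact div_le_self (by positivity) hd1
  have mf := (measurable_of_hasDerivAt h0).1
  have mW := hL.meas_lar x
  set t := Real.sqrt (l ^ 2 * J) with ht
  have ht0 : 0 < t := Real.sqrt_pos.2 (by positivity)
  have htt : l ^ 2 * J = t ^ 2 := (Real.sq_sqrt (by positivity)).symm
  have htl : t = l * Real.sqrt J := by rw [ht, Real.sqrt_mul (by positivity), Real.sqrt_sq hl.le]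
  have msB : ∀ n, n ≠ 0 → Measurable (smB n) := fun n hn =>
    (measurable_of_hasDerivAt (hasDerivAt_smB hn)).1
  -- the increment of `f` is an integrable dominating function
  have hfi : Integrable (fun y : Fin d → ℝ => f (y i) - f (x i)) (gpi x v) := by
    refine (pi_bd hM hv x i 1 (by norm_num) (F * Real.exp |x i|) (by fun_prop)
      (fun y => taylor_one hF h0 b1 (x i) (y i)) (by positivity)).1
  have l1 : Tendsto (fun n => ∫ y, (f (y i) - f (x i)) * smB n (lar L x y) ∂(gpi x v)) atTop
      (nhds (∫ y, (f (y i) - f (x i)) * min 1 (Real.exp (lar L x y)) ∂(gpi x v))) := by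
    refine tendsto_integral_filter_of_dominated_convergence
      (fun y => |f (y i) - f (x i)|) ?_ ?_ hfi.abs ?_
    · filter_upwards [eventually_ne_atTop 0] with n hn
      have := msB n hn
      exact Measurable.aestronglyMeasurable (by fun_prop)
    · refine Eventually.of_forall fun n => ae_of_all _ fun y => ?_
      rw [Real.norm_eq_abs, abs_mul]
      exact mul_le_of_le_one_right (abs_nonneg _) (abs_smB_le _ _)
    · exact ae_of_all _ fun y => (tendsto_smB _).const_mul _
  have l2 : Tendsto (fun n => ∫ z, smB n (-(l ^ 2 * J) / 2 + t * z) ∂(gaussianReal 0 1)) atTop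
      (nhds (2 * stdCDF (-t / 2))) := by
    rw [← integral_acc ht0, htt]
    refine tendsto_integral_filter_of_dominated_convergence (fun _ => 1) ?_ ?_
      (integrable_const _) ?_
    · filter_upwards [eventually_ne_atTop 0] with n hn
      have := msB n hn
      exact Measurable.aestronglyMeasurable (by fun_prop)
    · exact Eventually.of_forall fun n => ae_of_all _ fun y => abs_smB_le _ _
    · exact ae_of_all _ fun y => tendsto_smB _
  have l3 : Tendsto (fun n => ∫ z, smB' n (-(l ^ 2 * J) / 2 + t * z) ∂(gaussianReal 0 1)) atTop
      (nhds (stdCDF (-t / 2))) := by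
    have : NullSingletonClass (gaussianReal 0 1) :=
      nullSingletonClass_gaussianReal one_ne_zero
    rw [← integral_acc' ht0, htt]
    refine tendsto_integral_filter_of_dominated_convergence (fun _ => 1) ?_ ?_
      (integrable_const _) ?_
    · refine Eventually.of_forall fun n => ?_
      have := (continuous_smB' (n := n))
      exact Continuous.aestronglyMeasurable (by fun_prop)
    · exact Eventually.of_forall fun n => ae_of_all _ fun y => abs_smB'_le _ _
    · have hne : ∀ᵐ z ∂(gaussianReal 0 1), z ≠ t / 2 := by
        simp [ae_iff]
      filter_upwards [hne] with z hz
      refine tendsto_smB' fun h0 => hz ?_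
      have : t * (z - t / 2) = 0 := by linarith
      rcases mul_eq_zero.1 this with h | h
      · exact absurd h ht0.ne'
      · linarith
  have lim := (l1.const_mul (d : ℝ)).sub
    ((l3.const_mul (l ^ 2 * f1 (x i) * L1 (x i))).add (l2.const_mul (l ^ 2 / 2 * f2 (x i))))
  have e : l ^ 2 * f1 (x i) * L1 (x i) * stdCDF (-t / 2)
      + l ^ 2 / 2 * f2 (x i) * (2 * stdCDF (-t / 2))
      = l ^ 2 * stdCDF (-(l * Real.sqrt J) / 2) * (f2 (x i) + L1 (x i) * f1 (x i)) := by
    rw [← htl]; ring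
  rw [e] at lim
  refine le_of_tendsto lim.abs ?_
  filter_upwards [eventually_ne_atTop 0] with n hn
  exact h d i v hvd x f f1 f2 f3 F hF h0 h1 h2 b1 b2 b3 (smB n) (smB' n) (hasDerivAt_smB hn)
    continuous_smB' (abs_smB_le n) (abs_smB'_le n)

end

/-! ### Moments of sums of independent centred variables -/

lemma pow_add_expansion (n : ℕ) : ∃ A : ℝ, 0 ≤ A ∧ ∀ s x : ℝ,
    |(s + x) ^ (n + 2) - s ^ (n + 2) - (n + 2) * s ^ (n + 1) * x| ≤ A * (x ^ 2 * (|s| + |x|) ^ n) := by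
  induction n with
  | zero =>
    refine ⟨1, zero_le_one, fun s x => ?_⟩
    have : (s + x) ^ (0 + 2) - s ^ (0 + 2) - ((0 : ℕ) + 2) * s ^ (0 + 1) * x = x ^ 2 := by
      push_cast; ring
    rw [this, abs_of_nonneg (sq_nonneg x)]; simp
  | succ n ih =>
    obtain ⟨A, hA, h⟩ := ih
    refine ⟨A + (n + 2), by positivity, fun s x => ?_⟩
    have e : (s + x) ^ (n + 1 + 2) - s ^ (n + 1 + 2) - ((n + 1 : ℕ) + 2) * s ^ (n + 1 + 1) * x
        = (s + x) * ((s + x) ^ (n + 2) - s ^ (n + 2) - (n + 2) * s ^ (n + 1) * x)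
          + (n + 2) * (x ^ 2 * s ^ (n + 1)) := by
      push_cast; ring
    rw [e]
    refine (abs_add_le _ _).trans ?_
    have h1 : |(s + x) * ((s + x) ^ (n + 2) - s ^ (n + 2) - (n + 2) * s ^ (n + 1) * x)|
        ≤ (|s| + |x|) * (A * (x ^ 2 * (|s| + |x|) ^ n)) := by
      rw [abs_mul]
      exact mul_le_mul (abs_add_le _ _) (h s x) (abs_nonneg _) (by positivity)
    have h2 : |((n : ℝ) + 2) * (x ^ 2 * s ^ (n + 1))|
        ≤ (n + 2) * (x ^ 2 * (|s| + |x|) ^ (n + 1)) := by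
      rw [abs_mul, abs_mul, abs_pow, abs_pow, sq_abs, abs_of_nonneg (by positivity)]
      gcongr
      exact le_add_of_nonneg_right (abs_nonneg _)
    calc _ ≤ _ := add_le_add h1 h2
      _ = _ := by ring

/-- Measurable with all moments finite. -/
def AllMom {α : Type*} [MeasurableSpace α] (μ : Measure α) (ξ : α → ℝ) : Prop :=
  Measurable ξ ∧ ∀ n : ℕ, Integrable (fun a => |ξ a| ^ n) μ

lemma AllMom.pow {α : Type*} [MeasurableSpace α] {μ : Measure α} {ξ : α → ℝ} (h : AllMom μ ξ)
    (n : ℕ) : Integrable (fun a => ξ a ^ n) μ :=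
  (h.2 n).mono' (h.1.pow_const n).aestronglyMeasurable (ae_of_all _ fun a => by simp)

lemma abs_add_pow_le (a b : ℝ) (n : ℕ) : |a + b| ^ n ≤ 2 ^ n * (|a| ^ n + |b| ^ n) := by
  have h : |a + b| ≤ 2 * max |a| |b| := by
    refine (abs_add_le _ _).trans ?_
    linarith [le_max_left |a| |b|, le_max_right |a| |b|]
  calc |a + b| ^ n ≤ (2 * max |a| |b|) ^ n := by gcongr
    _ = 2 ^ n * max |a| |b| ^ n := mul_pow _ _ _
    _ ≤ _ := by
      gcongr
      rcases le_total |a| |b| with h | h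
      · rw [max_eq_right h]; exact le_add_of_nonneg_left (by positivity)
      · rw [max_eq_left h]; exact le_add_of_nonneg_right (by positivity)

section
variable {α β : Type*} [MeasurableSpace α] [MeasurableSpace β] {μ : Measure α} {ν : Measure β}
  [IsProbabilityMeasure μ] [IsProbabilityMeasure ν] {ξ : α → ℝ} {S : β → ℝ}

lemma AllMom.add_prod (hξ : AllMom μ ξ) (hS : AllMom ν S) :
    AllMom (μ.prod ν) fun z => ξ z.1 + S z.2 := by
  have m1 := hξ.1
  have m2 := hS.1
  refine ⟨by fun_prop, fun n => ?_⟩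
  refine ((((hξ.2 n).comp_fst ν).add ((hS.2 n).comp_snd μ)).const_mul (2 ^ n)).mono'
    (Measurable.aestronglyMeasurable (by fun_prop)) (ae_of_all _ fun z => ?_)
  rw [Real.norm_eq_abs, abs_of_nonneg (by positivity)]
  exact abs_add_pow_le _ _ n

/-- Adding an independent centred variable raises the moment of order `2q + 2` by at most a
multiple of the moment of order `2q`: the term of first order in the new variable vanishes. -/
lemma moment_step (q : ℕ) (hξ : AllMom μ ξ) (h0 : ∫ a, ξ a ∂μ = 0) :
    ∃ D : ℝ, 0 ≤ D ∧ ∀ (β : Type) (_ : MeasurableSpace β) (ν : Measure β)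
      (_ : IsProbabilityMeasure ν) (S : β → ℝ), AllMom ν S →
      ∫ z, (ξ z.1 + S z.2) ^ (2 * (q + 1)) ∂(μ.prod ν)
        ≤ ∫ b, S b ^ (2 * (q + 1)) ∂ν + D * (∫ b, S b ^ (2 * q) ∂ν + 1) := by
  obtain ⟨A, hA, hexp⟩ := pow_add_expansion (2 * q)
  have p2 : 0 ≤ ∫ a, ξ a ^ 2 ∂μ := integral_nonneg fun a => sq_nonneg _
  have p3 : 0 ≤ ∫ a, ξ a ^ (2 * q + 2) ∂μ := integral_nonneg fun a =>
    Even.pow_nonneg ⟨q + 1, by ring⟩ _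
  refine ⟨A * 2 ^ (2 * q) * (∫ a, ξ a ^ 2 ∂μ + ∫ a, ξ a ^ (2 * q + 2) ∂μ), by positivity,
    fun β _ ν _ S hS => ?_⟩
  have pS : 0 ≤ ∫ b, S b ^ (2 * q) ∂ν := integral_nonneg fun a =>
    Even.pow_nonneg ⟨q, by ring⟩ _
  -- The term of first order in `ξ z.1` has integral zero by `h0`.
  have key : ∀ z : α × β, (ξ z.1 + S z.2) ^ (2 * (q + 1)) ≤ 1 * S z.2 ^ (2 * q + 2)
      + ((2 * q : ℕ) + 2) * (ξ z.1 * S z.2 ^ (2 * q + 1))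
      + A * 2 ^ (2 * q) * (ξ z.1 ^ 2 * S z.2 ^ (2 * q) + ξ z.1 ^ (2 * q + 2) * 1) := by
    intro z
    have h1 := (abs_le.1 (hexp (S z.2) (ξ z.1))).2
    have h2 : (|S z.2| + |ξ z.1|) ^ (2 * q)
        ≤ 2 ^ (2 * q) * (S z.2 ^ (2 * q) + ξ z.1 ^ (2 * q)) := by
      have := abs_add_pow_le |S z.2| |ξ z.1| (2 * q)
      rw [abs_abs, abs_abs, abs_of_nonneg (by positivity)] at this
      rwa [Even.pow_abs ⟨q, by ring⟩, Even.pow_abs ⟨q, by ring⟩] at this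
    have h3 : A * (ξ z.1 ^ 2 * (|S z.2| + |ξ z.1|) ^ (2 * q))
        ≤ A * (ξ z.1 ^ 2 * (2 ^ (2 * q) * (S z.2 ^ (2 * q) + ξ z.1 ^ (2 * q)))) := by gcongr
    have e1 : (ξ z.1 + S z.2) ^ (2 * (q + 1)) = (S z.2 + ξ z.1) ^ (2 * q + 2) := by
      rw [add_comm]; rfl
    have e2 : A * (ξ z.1 ^ 2 * (2 ^ (2 * q) * (S z.2 ^ (2 * q) + ξ z.1 ^ (2 * q))))
        = A * 2 ^ (2 * q) * (ξ z.1 ^ 2 * S z.2 ^ (2 * q) + ξ z.1 ^ (2 * q + 2) * 1) := by ring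
    rw [e1]
    linarith
  have x1 := hξ.pow 1
  simp only [pow_one] at x1
  have i1 : Integrable (fun z : α × β => (1 : ℝ) * S z.2 ^ (2 * q + 2)) (μ.prod ν) :=
    (integrable_const (1 : ℝ)).mul_prod (hS.pow _)
  have i2 : Integrable (fun z : α × β => ξ z.1 * S z.2 ^ (2 * q + 1)) (μ.prod ν) :=
    x1.mul_prod (hS.pow _)
  have i3 : Integrable (fun z : α × β => ξ z.1 ^ 2 * S z.2 ^ (2 * q)) (μ.prod ν) :=
    (hξ.pow 2).mul_prod (hS.pow _)
  have i4 : Integrable (fun z : α × β => ξ z.1 ^ (2 * q + 2) * (1 : ℝ)) (μ.prod ν) :=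
    (hξ.pow _).mul_prod (integrable_const (1 : ℝ))
  have i34 : Integrable (fun z : α × β => A * 2 ^ (2 * q) *
      (ξ z.1 ^ 2 * S z.2 ^ (2 * q) + ξ z.1 ^ (2 * q + 2) * 1)) (μ.prod ν) :=
    (i3.add i4).const_mul _
  have i12 : Integrable (fun z : α × β => 1 * S z.2 ^ (2 * q + 2)
      + ((2 * q : ℕ) + 2) * (ξ z.1 * S z.2 ^ (2 * q + 1))) (μ.prod ν) := i1.add (i2.const_mul _)
  refine (integral_mono ((hξ.add_prod hS).pow _) (i12.add i34) key).trans (le_of_eq_of_le ?_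
    (?_ : ∫ b, S b ^ (2 * q + 2) ∂ν + A * 2 ^ (2 * q) * ((∫ a, ξ a ^ 2 ∂μ) *
      (∫ b, S b ^ (2 * q) ∂ν) + ∫ a, ξ a ^ (2 * q + 2) ∂μ) ≤ _))
  · rw [integral_add' i12 i34, integral_add i1 (i2.const_mul _),
      integral_const_mul (((2 * q : ℕ) : ℝ) + 2), integral_const_mul (A * 2 ^ (2 * q)),
      integral_add i3 i4, integral_prod_mul (fun _ => (1 : ℝ)) (fun b => S b ^ (2 * q + 2)),
      integral_prod_mul ξ (fun b => S b ^ (2 * q + 1)),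
      integral_prod_mul (fun a => ξ a ^ 2) (fun b => S b ^ (2 * q)),
      integral_prod_mul (fun a => ξ a ^ (2 * q + 2)) (fun _ => (1 : ℝ)), h0]
    simp
  · have e : 2 * (q + 1) = 2 * q + 2 := by ring
    rw [e, mul_assoc (A * 2 ^ (2 * q))]
    gcongr
    nlinarith
end

section
variable {μ : Measure ℝ} [IsProbabilityMeasure μ] {ξ : ℝ → ℝ}

lemma sum_eq_prod (ξ : ℝ → ℝ) (n : ℕ) (x : Fin (n + 1) → ℝ) : ∑ i, ξ (x i) =
    (fun z : ℝ × (Fin n → ℝ) => ξ z.1 + ∑ i, ξ (z.2 i))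
      (MeasurableEquiv.piFinSuccAbove (fun _ => ℝ) 0 x) := by
  rw [Fin.sum_univ_succ]
  rfl

lemma allMom_sum (hξ : AllMom μ ξ) (n : ℕ) :
    AllMom (Measure.pi fun _ : Fin n => μ) fun x => ∑ i, ξ (x i) := by
  induction n with
  | zero =>
    refine ⟨by simp, fun k => ?_⟩
    simp
  | succ n ih =>
    have mp := measurePreserving_piFinSuccAbove (fun _ : Fin (n + 1) => μ) 0
    have h := hξ.add_prod ih
    have m := hξ.1
    refine ⟨by fun_prop, fun k => ?_⟩
    simp only [sum_eq_prod]
    exact (mp.integrable_comp_emb (MeasurableEquiv.measurableEmbedding _)).2 (h.2 k)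

/-- Even moments of a sum of `n` i.i.d. centred variables grow like those of a Gaussian of
variance `n`. -/
lemma iid_moment (hξ : AllMom μ ξ) (h0 : ∫ a, ξ a ∂μ = 0) (q : ℕ) :
    ∃ C : ℝ, 0 ≤ C ∧ ∀ n : ℕ, ∫ x, (∑ i, ξ (x i)) ^ (2 * q) ∂(Measure.pi fun _ : Fin n => μ)
      ≤ C * n ^ q := by
  induction q with
  | zero => exact ⟨1, zero_le_one, fun n => by simp⟩
  | succ q ih =>
    obtain ⟨C, hC, h⟩ := ih
    obtain ⟨D, hD, hstep⟩ := moment_step q hξ h0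
    refine ⟨D * (C + 1), by positivity, fun n => ?_⟩
    induction n with
    | zero => simp
    | succ n ihn =>
      have mp := measurePreserving_piFinSuccAbove (fun _ : Fin (n + 1) => μ) 0
      simp only [sum_eq_prod]
      have e := mp.integral_comp (MeasurableEquiv.measurableEmbedding _)
        (fun z : ℝ × (Fin n → ℝ) => (ξ z.1 + ∑ i, ξ (z.2 i)) ^ (2 * (q + 1)))
      refine (le_of_eq e).trans ((hstep _ _ _ inferInstance _ (allMom_sum hξ n)).trans ?_)
      have h1 : (n : ℝ) ^ q ≤ (n + 1 : ℝ) ^ q := by gcongr; linarith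
      have h2 : (1 : ℝ) ≤ (n + 1 : ℝ) ^ q := one_le_pow₀ (by linarith [Nat.cast_nonneg (α := ℝ) n])
      have h3 : D * (C * (n : ℝ) ^ q + 1) ≤ D * (C + 1) * (n + 1 : ℝ) ^ q := by
        rw [mul_assoc]; gcongr; nlinarith
      have h4 : D * (C + 1) * (n : ℝ) ^ (q + 1) ≤ D * (C + 1) * (n * (n + 1 : ℝ) ^ q) := by
        rw [pow_succ, mul_comm ((n : ℝ) ^ q)]; gcongr
      have h5 := mul_le_mul_of_nonneg_left (add_le_add (h n) (le_refl (1 : ℝ))) hD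
      push_cast
      calc _ ≤ D * (C + 1) * (n * (n + 1 : ℝ) ^ q) + D * (C + 1) * (n + 1 : ℝ) ^ q :=
            add_le_add (ihn.trans h4) (h5.trans h3)
        _ = _ := by ring
end

/-! ### Consequences of the assumptions on the density -/

lemma MemS.abs_le {n : ℕ} {g : ℝ → ℝ} (hg : MemS n g) {s : ℝ} (hs : 0 < s) {i : ℕ} (hi : i ≤ n)
    (x : ℝ) : |iteratedDeriv i g x| ≤ normIS (iteratedDeriv i g) s * Real.exp (s * |x|) := by
  have h : Real.exp (-(s * |x|)) * |iteratedDeriv i g x| ≤ normIS (iteratedDeriv i g) s :=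
    le_ciSup (hg.2 s hs i hi) x
  have e : |iteratedDeriv i g x|
      = Real.exp (-(s * |x|)) * |iteratedDeriv i g x| * Real.exp (s * |x|) := by
    rw [mul_right_comm, ← Real.exp_add]; simp
  rw [e]
  gcongr

lemma normIS_nonneg (g : ℝ → ℝ) (s : ℝ) : 0 ≤ normIS g s :=
  Real.iSup_nonneg fun x => by positivity

lemma iteratedDeriv_three (g : ℝ → ℝ) : iteratedDeriv 3 g = deriv (deriv (deriv g)) := by
  rw [iteratedDeriv_succ, iteratedDeriv_succ, iteratedDeriv_one]

lemma iteratedDeriv_two' (g : ℝ → ℝ) : iteratedDeriv 2 g = deriv (deriv g) := by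
  rw [iteratedDeriv_succ, iteratedDeriv_one]

lemma MemS.hasDerivAt {n : ℕ} (hn : 3 ≤ n) {g : ℝ → ℝ} (hg : MemS n g) :
    (∀ t, HasDerivAt g (deriv g t) t) ∧ (∀ t, HasDerivAt (deriv g) (deriv (deriv g) t) t) ∧
      ∀ t, HasDerivAt (deriv (deriv g)) (deriv (deriv (deriv g)) t) t := by
  have h : ∀ m : ℕ, m < 3 → Differentiable ℝ (iteratedDeriv m g) := fun m hm =>
    hg.1.differentiable_iteratedDeriv m (by exact_mod_cast hm.trans_le hn)
  have h0 := h 0 (by norm_num)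
  have h1 := h 1 (by norm_num)
  have h2 := h 2 (by norm_num)
  rw [iteratedDeriv_zero] at h0
  rw [iteratedDeriv_one] at h1
  rw [iteratedDeriv_two'] at h2
  exact ⟨fun t => (h0 t).hasDerivAt, fun t => (h1 t).hasDerivAt, fun t => (h2 t).hasDerivAt⟩

lemma isPot_log {ρ : ℝ → ℝ} (hlog : MemS 4 fun x => Real.log (ρ x)) :
    ∃ K, IsPot (fun x => Real.log (ρ x)) (dl ρ) (d2l ρ) (deriv (d2l ρ)) K := by
  obtain ⟨h0, h1, h2⟩ := hlog.hasDerivAt (by norm_num)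
  set L := fun x => Real.log (ρ x) with hL
  set N : ℕ → ℝ := fun i => normIS (iteratedDeriv i L) 1
  have hN : ∀ i, 0 ≤ N i := fun i => normIS_nonneg _ _
  have hb : ∀ i ≤ 4, ∀ t, |iteratedDeriv i L t| ≤ N i * Real.exp |t| := fun i hi t => by
    simpa using hlog.abs_le one_pos hi t
  refine ⟨N 1 + N 2 + N 3, h0, h1, h2, fun t => ?_, fun t => ?_, fun t => ?_, ?_⟩
  · have := hb 1 (by norm_num) t
    rw [iteratedDeriv_one] at this
    refine this.trans (mul_le_mul_of_nonneg_right ?_ (Real.exp_pos _).le)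
    linarith [hN 2, hN 3]
  · have := hb 2 (by norm_num) t
    rw [iteratedDeriv_two'] at this
    refine this.trans (mul_le_mul_of_nonneg_right ?_ (Real.exp_pos _).le)
    linarith [hN 1, hN 3]
  · have := hb 3 (by norm_num) t
    rw [iteratedDeriv_three] at this
    refine this.trans (mul_le_mul_of_nonneg_right ?_ (Real.exp_pos _).le)
    linarith [hN 1, hN 2]
  · linarith [hN 1, hN 2, hN 3]

/-- The one-dimensional target law with density `ρ`. -/
def tgt (ρ : ℝ → ℝ) : Measure ℝ := volume.withDensity fun x => ENNReal.ofReal (ρ x)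

section
variable {ρ : ℝ → ℝ} {L2 L3 : ℝ → ℝ} {K : ℝ}

lemma isProbabilityMeasure_tgt (hpos : ∀ x, 0 < ρ x) (hint : ∫ x, ρ x = 1) :
    IsProbabilityMeasure (tgt ρ) := by
  have hi : Integrable ρ := by
    by_contra h
    rw [integral_undef h] at hint
    exact zero_ne_one hint
  refine ⟨?_⟩
  rw [tgt, withDensity_apply _ MeasurableSet.univ, Measure.restrict_univ,
    ← ofReal_integral_eq_lintegral_ofReal hi (ae_of_all _ fun x => (hpos x).le), hint,
    ENNReal.ofReal_one]

lemma integral_tgt (hmeas : Measurable ρ) (hpos : ∀ x, 0 < ρ x) (g : ℝ → ℝ) :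
    ∫ x, g x ∂(tgt ρ) = ∫ x, g x * ρ x := by
  rw [tgt, integral_withDensity_eq_integral_toReal_smul hmeas.ennreal_ofReal
    (ae_of_all _ fun x => ENNReal.ofReal_lt_top)]
  refine integral_congr_ae (ae_of_all _ fun x => ?_)
  simp only [smul_eq_mul, ENNReal.toReal_ofReal (hpos x).le, mul_comm]

lemma integrable_tgt (hmeas : Measurable ρ) (hpos : ∀ x, 0 < ρ x) {g : ℝ → ℝ} :
    Integrable g (tgt ρ) ↔ Integrable fun x => g x * ρ x := by
  rw [tgt, integrable_withDensity_iff hmeas.ennreal_ofReal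
    (ae_of_all _ fun x => ENNReal.ofReal_lt_top)]
  simp only [ENNReal.toReal_ofReal (hpos _).le]

lemma hasDerivAt_rho (hpos : ∀ x, 0 < ρ x)
    (h : ∀ t, HasDerivAt (fun x => Real.log (ρ x)) (dl ρ t) t) (t : ℝ) :
    HasDerivAt ρ (dl ρ t * ρ t) t := by
  have e : ρ = fun x => Real.exp (Real.log (ρ x)) := funext fun x => (Real.exp_log (hpos x)).symm
  have := (h t).exp
  rw [← e, Real.exp_log (hpos t), mul_comm] at this
  exact this

/-- Super-exponential tails: `ρ` is dominated by every `e^{-c|x|}`. -/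
lemma rho_tail (hpos : ∀ x, 0 < ρ x)
    (h : ∀ t, HasDerivAt (fun x => Real.log (ρ x)) (dl ρ t) t) (htail : SuperExpTails ρ) (c : ℝ) :
    ∃ A, 0 ≤ A ∧ ∀ x, Real.exp (c * |x|) * ρ x ≤ A := by
  obtain ⟨X1, hX1⟩ := eventually_atTop.1 (htail.1.eventually_le_atBot (-c))
  obtain ⟨X2, hX2⟩ := eventually_atBot.1 (htail.2.eventually_ge_atTop c)
  set X := max 0 (max X1 (-X2)) with hX
  have hX0 : 0 ≤ X := le_max_left _ _
  have hXX1 : X1 ≤ X := (le_max_left _ _).trans (le_max_right _ _)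
  have hXX2 : -X ≤ X2 := by
    have : -X2 ≤ X := (le_max_right _ _).trans (le_max_right _ _)
    linarith
  have hρc : Continuous ρ :=
    continuous_iff_continuousAt.2 fun t => (hasDerivAt_rho hpos h t).continuousAt
  set ψ : ℝ → ℝ := fun x => Real.exp (c * |x|) * ρ x with hψ
  have hψc : Continuous ψ := by fun_prop
  obtain ⟨A, hA⟩ := (isCompact_Icc (a := -X) (b := X)).exists_bound_of_continuousOn
    hψc.continuousOn
  have hA' : ∀ x ∈ Icc (-X) X, ψ x ≤ A := fun x hx => (le_abs_self _).trans (hA x hx)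
  -- `log ρ` has slope at most `-c` right of `X` and at least `c` left of `-X`, so the weighted
  -- density is monotone there and its maximum is attained on `[-X, X]`.
  have d1 : ∀ t, HasDerivAt (fun x => Real.exp (c * x) * ρ x)
      (Real.exp (c * t) * ρ t * (c + dl ρ t)) t := fun t =>
    ((((hasDerivAt_id t).const_mul c).exp).mul (hasDerivAt_rho hpos h t)).congr_deriv (by
      simp only [id]; ring)
  have d2 : ∀ t, HasDerivAt (fun x => Real.exp (-c * x) * ρ x)
      (Real.exp (-c * t) * ρ t * (-c + dl ρ t)) t := fun t =>
    ((((hasDerivAt_id t).const_mul (-c)).exp).mul (hasDerivAt_rho hpos h t)).congr_deriv (by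
      simp only [id]; ring)
  refine ⟨A, (norm_nonneg _).trans (hA 0 ⟨by linarith, hX0⟩), fun x => ?_⟩
  rcases le_total x (-X) with hx | hx
  · have mono : MonotoneOn (fun x => Real.exp (-c * x) * ρ x) (Iic (-X)) := by
      refine monotoneOn_of_hasDerivWithinAt_nonneg (convex_Iic _)
        (fun t _ => (d2 t).continuousAt.continuousWithinAt)
        (fun t _ => (d2 t).hasDerivWithinAt) fun t ht => ?_
      rw [interior_Iic] at ht
      have := hX2 t (ht.le.trans hXX2)
      have := hpos t
      exact mul_nonneg (by positivity) (by linarith)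
    have h1 := mono hx (mem_Iic.2 le_rfl) hx
    have h2 := hA' (-X) ⟨le_rfl, by linarith⟩
    simp only [hψ] at h1 h2
    rw [abs_of_nonpos (by linarith : -X ≤ 0)] at h2
    rw [abs_of_nonpos (by linarith : x ≤ 0), mul_neg, ← neg_mul]
    rw [mul_neg, ← neg_mul] at h2
    exact h1.trans h2
  · rcases le_total x X with hx' | hx'
    · exact hA' x ⟨hx, hx'⟩
    · have anti : AntitoneOn (fun x => Real.exp (c * x) * ρ x) (Ici X) := by
        refine antitoneOn_of_hasDerivWithinAt_nonpos (convex_Ici _)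
          (fun t _ => (d1 t).continuousAt.continuousWithinAt)
          (fun t _ => (d1 t).hasDerivWithinAt) fun t ht => ?_
        rw [interior_Ici] at ht
        have := hX1 t (hXX1.trans ht.le)
        have := hpos t
        exact mul_nonpos_of_nonneg_of_nonpos (by positivity) (by linarith)
      have h1 := anti (mem_Ici.2 le_rfl) hx' hx'
      have h2 := hA' X ⟨by linarith, le_rfl⟩
      simp only [hψ] at h1 h2
      rw [abs_of_nonneg hX0] at h2
      rw [abs_of_nonneg (by linarith : 0 ≤ x)]
      exact h1.trans h2

lemma exp_moment (hmeas : Measurable ρ) (hpos : ∀ x, 0 < ρ x)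
    (h : ∀ t, HasDerivAt (fun x => Real.log (ρ x)) (dl ρ t) t) (htail : SuperExpTails ρ) (c : ℝ) :
    Integrable (fun x => Real.exp (c * |x|)) (tgt ρ) := by
  rw [integrable_tgt hmeas hpos]
  obtain ⟨A, hA, hb⟩ := rho_tail hpos h htail (c + 1)
  refine (integrable_inv_one_add_sq.const_mul (2 * A)).mono'
    (Measurable.aestronglyMeasurable (by fun_prop)) (ae_of_all _ fun x => ?_)
  rw [Real.norm_eq_abs, abs_of_nonneg (mul_nonneg (Real.exp_pos _).le (hpos x).le)]
  have e : Real.exp (c * |x|) * ρ x = Real.exp ((c + 1) * |x|) * ρ x * (Real.exp |x|)⁻¹ := by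
    rw [← Real.exp_neg, mul_right_comm, ← Real.exp_add]; congr 2; ring
  have q : 1 + x ^ 2 ≤ 2 * Real.exp |x| := by
    have := Real.quadratic_le_exp_of_nonneg (abs_nonneg x)
    rw [sq_abs] at this
    linarith [abs_nonneg x]
  have q' : (Real.exp |x|)⁻¹ ≤ 2 * (1 + x ^ 2)⁻¹ := by
    rw [inv_le_iff_one_le_mul₀ (Real.exp_pos _), mul_right_comm, ← div_eq_mul_inv,
      one_le_div (by positivity)]
    exact q
  rw [e]
  calc _ ≤ A * (2 * (1 + x ^ 2)⁻¹) :=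
        mul_le_mul (hb x) q' (by positivity) hA
    _ = _ := by ring

lemma allMom_tgt (hmeas : Measurable ρ) (hpos : ∀ x, 0 < ρ x)
    (h : ∀ t, HasDerivAt (fun x => Real.log (ρ x)) (dl ρ t) t) (htail : SuperExpTails ρ)
    {ξ : ℝ → ℝ} (hm : Measurable ξ) {A c : ℝ} (hb : ∀ x, |ξ x| ≤ A * Real.exp (c * |x|)) :
    AllMom (tgt ρ) ξ := by
  refine ⟨hm, fun n => ?_⟩
  refine ((exp_moment hmeas hpos h htail (n * c)).const_mul (A ^ n)).mono'
    (Measurable.aestronglyMeasurable (by fun_prop)) (ae_of_all _ fun x => ?_)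
  rw [Real.norm_eq_abs, abs_of_nonneg (by positivity)]
  calc |ξ x| ^ n ≤ (A * Real.exp (c * |x|)) ^ n := by gcongr; exact hb x
    _ = _ := by rw [mul_pow, ← Real.exp_nat_mul]; congr 2; ring

lemma IsPot.bound_sq {L L1 L2 L3 : ℝ → ℝ} (hL : IsPot L L1 L2 L3 K) (J x : ℝ) :
    |L1 x ^ 2 - J| ≤ (K ^ 2 + |J|) * Real.exp (2 * |x|) := by
  have e1 : 1 ≤ Real.exp (2 * |x|) := Real.one_le_exp (by positivity)
  have e2 : Real.exp (2 * |x|) = Real.exp |x| ^ 2 := by rw [← Real.exp_nat_mul]; norm_num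
  have h1 : |L1 x ^ 2| ≤ K ^ 2 * Real.exp (2 * |x|) := by
    rw [abs_pow, e2, ← mul_pow]
    exact pow_le_pow_left₀ (abs_nonneg _) (hL.b1 x) 2
  have h2 : |J| ≤ |J| * Real.exp (2 * |x|) := le_mul_of_one_le_right (abs_nonneg _) e1
  rw [add_mul]
  exact (abs_sub _ _).trans (add_le_add h1 h2)

lemma IsPot.bound_two {L L1 L2 L3 : ℝ → ℝ} (hL : IsPot L L1 L2 L3 K) (J x : ℝ) :
    |L2 x + J| ≤ (K + |J|) * Real.exp (1 * |x|) := by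
  have e1 : 1 ≤ Real.exp |x| := Real.one_le_exp (by positivity)
  rw [add_mul, one_mul]
  exact (abs_add_le _ _).trans (add_le_add (hL.b2 x) (le_mul_of_one_le_right (abs_nonneg _) e1))

/-- The Fisher information `J` is positive, and `L1 ^ 2` and `-L2` have mean `J`. -/
lemma fisher (hmeas : Measurable ρ) (hpos : ∀ x, 0 < ρ x) (hint : ∫ x, ρ x = 1)
    (hL : IsPot (fun x => Real.log (ρ x)) (dl ρ) L2 L3 K) (htail : SuperExpTails ρ) :
    0 < Jc ρ ∧ ∫ x, (dl ρ x ^ 2 - Jc ρ) ∂(tgt ρ) = 0 ∧ ∫ x, (L2 x + Jc ρ) ∂(tgt ρ) = 0 := by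
  have := isProbabilityMeasure_tgt hpos hint
  obtain ⟨-, m1, m2, m3⟩ := hL.meas
  have A1 : AllMom (tgt ρ) (dl ρ) := allMom_tgt hmeas hpos hL.d0 htail m1 (A := K) (c := 1)
    fun x => by simpa using hL.b1 x
  have A2 : AllMom (tgt ρ) L2 := allMom_tgt hmeas hpos hL.d0 htail m2 (A := K) (c := 1)
    fun x => by simpa using hL.b2 x
  have i1 := A1.pow 2
  have i0 : Integrable (dl ρ) (tgt ρ) := by simpa using A1.pow 1
  have i2 : Integrable L2 (tgt ρ) := by simpa using A2.pow 1
  have hJ : Jc ρ = ∫ x, dl ρ x ^ 2 ∂(tgt ρ) := (integral_tgt hmeas hpos _).symm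
  have hρ := hasDerivAt_rho hpos hL.d0
  refine ⟨?_, ?_, ?_⟩
  · have hc : Continuous fun x => dl ρ x ^ 2 * ρ x := by
      have c1 : Continuous (dl ρ) := continuous_iff_continuousAt.2 fun t => (hL.d1 t).continuousAt
      have c2 : Continuous ρ := continuous_iff_continuousAt.2 fun t => (hρ t).continuousAt
      fun_prop
    have hi := (integrable_tgt hmeas hpos).1 i1
    have h0 : 0 ≤ fun x => dl ρ x ^ 2 * ρ x := fun x => mul_nonneg (sq_nonneg _) (hpos x).le
    unfold Jc rhoE
    rw [integral_pos_iff_support_of_nonneg h0 hi]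
    refine hc.isOpen_support.measure_pos _ ?_
    obtain ⟨x, hx⟩ := (htail.1.eventually_lt_atBot 0).exists
    exact ⟨x, mul_ne_zero (pow_ne_zero 2 hx.ne) (hpos x).ne'⟩
  · rw [integral_sub i1 (integrable_const _), hJ]; simp
  · rw [integral_add i2 (integrable_const _), hJ, integral_tgt hmeas hpos L2,
      integral_tgt hmeas hpos fun x => dl ρ x ^ 2]
    have := integral_mul_deriv_eq_deriv_mul_of_integrable (u := dl ρ) (v := ρ) (u' := L2)
      (v' := fun x => dl ρ x * ρ x) (fun x _ => hL.d1 x) (fun x _ => hρ x) ?_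
      ((integrable_tgt hmeas hpos).1 i2) ((integrable_tgt hmeas hpos).1 i0)
    · have e : ∫ x, dl ρ x ^ 2 * ρ x = ∫ x, dl ρ x * (dl ρ x * ρ x) :=
        integral_congr_ae (ae_of_all _ fun x => by ring)
      rw [integral_const, e, this]; simp
    · refine ((integrable_tgt hmeas hpos).1 i1).congr (ae_of_all _ fun x => ?_)
      simp only [Pi.mul_apply]; ring

end

/-! ### Uniform moments of the normalised error -/

section
variable {μ : Measure ℝ} [IsProbabilityMeasure μ] {ξ : ℝ → ℝ}

lemma integral_coord {g : ℝ → ℝ} (hm : Measurable g) (hg : Integrable g μ) {d : ℕ} (i : Fin d) :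
    Integrable (fun x : Fin d → ℝ => g (x i)) (Measure.pi fun _ => μ) ∧
      ∫ x : Fin d → ℝ, g (x i) ∂(Measure.pi fun _ => μ) = ∫ t, g t ∂μ := by
  have mp := measurePreserving_eval (fun _ : Fin d => μ) i
  refine ⟨(mp.integrable_comp hg.aestronglyMeasurable).2 hg, ?_⟩
  rw [← mp.map_eq, integral_map mp.measurable.aemeasurable hm.aestronglyMeasurable, mp.map_eq]

lemma avg_moment (hξ : AllMom μ ξ) (h0 : ∫ a, ξ a ∂μ = 0) {l : ℝ} (hl : 0 < l) (P : ℕ) :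
    ∃ C : ℝ, 0 ≤ C ∧ ∀ d : ℕ, d ≠ 0 → ∀ s : ℝ, s ^ 2 = l ^ 2 / d →
      Integrable (fun x : Fin d → ℝ => (|1 / (d : ℝ) * ∑ i, ξ (x i)| / s) ^ (2 * P))
        (Measure.pi fun _ => μ) ∧
      ∫ x : Fin d → ℝ, (|1 / (d : ℝ) * ∑ i, ξ (x i)| / s) ^ (2 * P) ∂(Measure.pi fun _ => μ)
        ≤ C := by
  obtain ⟨C, hC, h⟩ := iid_moment hξ h0 P
  refine ⟨C * (1 / l ^ 2) ^ P, by positivity, fun d hd s hs => ?_⟩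
  have hd0 : (0 : ℝ) < d := by exact_mod_cast Nat.pos_of_ne_zero hd
  have e : ∀ x : Fin d → ℝ, (|1 / (d : ℝ) * ∑ i, ξ (x i)| / s) ^ (2 * P)
      = (∑ i, ξ (x i)) ^ (2 * P) * (1 / (l ^ 2 * d)) ^ P := fun x => by
    rw [pow_mul, pow_mul, ← mul_pow, div_pow, sq_abs, hs]
    congr 1
    field_simp
  simp only [e]
  refine ⟨((allMom_sum hξ d).pow _).mul_const _, ?_⟩
  rw [integral_mul_const]
  refine (mul_le_mul_of_nonneg_right (h d) (by positivity)).trans (le_of_eq ?_)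
  rw [mul_assoc, ← mul_pow]
  congr 2
  field_simp

lemma exp_avg_moment (hexp : ∀ c : ℝ, Integrable (fun x => Real.exp (c * |x|)) μ) (n : ℕ) :
    ∃ C : ℝ, 0 ≤ C ∧ ∀ d : ℕ, d ≠ 0 →
      Integrable (fun x : Fin d → ℝ => (1 / (d : ℝ) * ∑ i, Real.exp (2 * |x i|)) ^ (n + 1))
        (Measure.pi fun _ => μ) ∧
      ∫ x : Fin d → ℝ, (1 / (d : ℝ) * ∑ i, Real.exp (2 * |x i|)) ^ (n + 1)
        ∂(Measure.pi fun _ => μ) ≤ C := by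
  set c : ℝ := (n + 1 : ℕ) * 2 with hc
  have hm : Measurable fun t : ℝ => Real.exp (c * |t|) := by fun_prop
  refine ⟨∫ t, Real.exp (c * |t|) ∂μ, integral_nonneg fun t => (Real.exp_pos _).le,
    fun d hd => ?_⟩
  have hd0 : (0 : ℝ) < d := by exact_mod_cast Nat.pos_of_ne_zero hd
  have hb : ∀ x : Fin d → ℝ, (1 / (d : ℝ) * ∑ i, Real.exp (2 * |x i|)) ^ (n + 1)
      ≤ 1 / (d : ℝ) * ∑ i, Real.exp (c * |x i|) := fun x => by
    have := pow_sum_div_card_le_sum_pow (s := Finset.univ) (f := fun i => Real.exp (2 * |x i|))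
      (fun i _ => (Real.exp_pos _).le) n
    rw [Finset.card_univ, Fintype.card_fin] at this
    have e : ∀ i, Real.exp (2 * |x i|) ^ (n + 1) = Real.exp (c * |x i|) := fun i => by
      rw [← Real.exp_nat_mul]; congr 1; rw [hc]; ring
    simp only [e] at this
    refine le_trans (le_of_eq ?_) (mul_le_mul_of_nonneg_left this (by positivity : 0 ≤ 1 / (d : ℝ)))
    rw [mul_pow, pow_succ (1 / (d : ℝ)), one_div_pow]
    field_simp
  have hi : Integrable (fun x : Fin d → ℝ => 1 / (d : ℝ) * ∑ i, Real.exp (c * |x i|))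
      (Measure.pi fun _ => μ) :=
    (integrable_finsetSum _ fun i _ => (integral_coord hm (hexp c) i).1).const_mul _
  have hi' : Integrable (fun x : Fin d → ℝ => (1 / (d : ℝ) * ∑ i, Real.exp (2 * |x i|)) ^ (n + 1))
      (Measure.pi fun _ => μ) :=
    hi.mono' (Measurable.aestronglyMeasurable (by fun_prop)) (ae_of_all _ fun x => by
      rw [Real.norm_eq_abs, abs_of_nonneg (by positivity)]; exact hb x)
  refine ⟨hi', (integral_mono hi' hi hb).trans (le_of_eq ?_)⟩
  rw [integral_const_mul, integral_finsetSum _ fun i _ => (integral_coord hm (hexp c) i).1]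
  simp only [(integral_coord hm (hexp c) _).2]
  rw [Finset.sum_const, Finset.card_univ, Fintype.card_fin, nsmul_eq_mul]
  field_simp

lemma four_pow (a b c e : ℝ) (ha : 0 ≤ a) (hb : 0 ≤ b) (hc : 0 ≤ c) (he : 0 ≤ e) (n : ℕ) :
    (a + b + (c + e)) ^ n ≤ 2 ^ n * (2 ^ n * (a ^ n + b ^ n) + 2 ^ n * (c ^ n + e ^ n)) := by
  have h1 := abs_add_pow_le (a + b) (c + e) n
  have h2 := abs_add_pow_le a b n
  have h3 := abs_add_pow_le c e n
  rw [abs_of_nonneg (by positivity)] at h2 h3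
  rw [abs_of_nonneg (by positivity), abs_of_nonneg (by positivity : 0 ≤ a + b),
    abs_of_nonneg (by positivity : 0 ≤ c + e)] at h1
  rw [abs_of_nonneg ha, abs_of_nonneg hb] at h2
  rw [abs_of_nonneg hc, abs_of_nonneg he] at h3
  refine h1.trans ?_
  gcongr

/-- The pointwise error bound, divided by the proposal standard deviation, has moments of all
orders that are bounded in the dimension. -/
lemma error_moment {L1 L2 : ℝ → ℝ} {J l : ℝ} (hl : 0 < l)
    (hexp : ∀ c : ℝ, Integrable (fun x => Real.exp (c * |x|)) μ)
    (m1 : AllMom μ fun x => L1 x ^ 2 - J) (h1 : ∫ x, (L1 x ^ 2 - J) ∂μ = 0)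
    (m2 : AllMom μ fun x => L2 x + J) (h2 : ∫ x, (L2 x + J) ∂μ = 0) (P : ℕ) (hP : P ≠ 0) :
    ∃ D : ℝ, 0 ≤ D ∧ ∀ (d : ℕ) (i : Fin d) (s : ℝ), 0 < s → s ^ 2 = l ^ 2 / d →
      ∃ Z : (Fin d → ℝ) → ℝ, (∀ x, Real.exp (2 * |x i|) * (errQ L1 L2 J s x + s) = s * Z x) ∧
        (∀ x, 1 ≤ Z x) ∧ ∃ Y : (Fin d → ℝ) → ℝ, (∀ x, Z x ^ P ≤ Y x) ∧
          Integrable Y (Measure.pi fun _ => μ) ∧ ∫ x, Y x ∂(Measure.pi fun _ => μ) ≤ D := by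
  obtain ⟨C1, hC1, a1⟩ := avg_moment m1 h1 hl P
  obtain ⟨C2, hC2, a2⟩ := avg_moment m2 h2 hl P
  obtain ⟨C3, hC3, a3⟩ := exp_avg_moment hexp (2 * P - 1)
  have hP1 : 2 * P - 1 + 1 = 2 * P := by omega
  simp only [hP1] at a3
  set c : ℝ := 2 * P * 2 with hc
  have hm : Measurable fun t : ℝ => Real.exp (c * |t|) := by fun_prop
  have p0 : 0 ≤ ∫ t, Real.exp (c * |t|) ∂μ := integral_nonneg fun t => (Real.exp_pos _).le
  set T : ℝ := 2 ^ (2 * P) with hT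
  have hT0 : 0 ≤ T := by positivity
  refine ⟨∫ t, Real.exp (c * |t|) ∂μ + T * (T * (C1 + C2) + T * (C3 + 1)), by positivity,
    fun d i s hs hsd => ?_⟩
  have hd : d ≠ 0 := by rintro rfl; exact i.elim0
  obtain ⟨i1, b1⟩ := a1 d hd s hsd
  obtain ⟨i2, b2⟩ := a2 d hd s hsd
  obtain ⟨i3, b3⟩ := a3 d hd
  obtain ⟨i0, b0⟩ := integral_coord hm (hexp c) i
  set u1 : (Fin d → ℝ) → ℝ := fun x => |1 / (d : ℝ) * ∑ i, (L1 (x i) ^ 2 - J)| / s with hu1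
  set u2 : (Fin d → ℝ) → ℝ := fun x => |1 / (d : ℝ) * ∑ i, (L2 (x i) + J)| / s with hu2
  set u3 : (Fin d → ℝ) → ℝ := fun x => 1 / (d : ℝ) * ∑ i, Real.exp (2 * |x i|) with hu3
  have n1 : ∀ x, 0 ≤ u1 x := fun x => by positivity
  have n2 : ∀ x, 0 ≤ u2 x := fun x => by positivity
  have n3 : ∀ x, 0 ≤ u3 x := fun x => by positivity
  refine ⟨fun x => Real.exp (2 * |x i|) * (u1 x + u2 x + (u3 x + 1)), fun x => ?_, fun x => ?_,
    fun x => Real.exp (c * |x i|) + T * (T * (u1 x ^ (2 * P) + u2 x ^ (2 * P))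
      + T * (u3 x ^ (2 * P) + 1)), fun x => ?_, ?_, ?_⟩
  · simp only [hu1, hu2, hu3, errQ]
    field_simp
    ring
  · have e1 : 1 ≤ Real.exp (2 * |x i|) := Real.one_le_exp (by positivity)
    exact one_le_mul_of_one_le_of_one_le e1 (by linarith [n1 x, n2 x, n3 x])
  · have h4 := four_pow _ _ _ _ (n1 x) (n2 x) (n3 x) zero_le_one (2 * P)
    rw [one_pow] at h4
    refine le_trans ?_ (add_le_add le_rfl h4)
    rw [mul_pow]
    set w := u1 x + u2 x + (u3 x + 1)
    have e : Real.exp (c * |x i|) = (Real.exp (2 * |x i|) ^ P) ^ 2 := by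
      rw [← pow_mul, ← Real.exp_nat_mul]; congr 1; push_cast; rw [hc]; ring
    rw [e, mul_comm 2 P, pow_mul w]
    nlinarith [sq_nonneg (Real.exp (2 * |x i|) ^ P - w ^ P), sq_nonneg (Real.exp (2 * |x i|) ^ P),
      sq_nonneg (w ^ P)]
  · exact i0.add ((((i1.add i2).const_mul T).add
      ((i3.add (integrable_const (1 : ℝ))).const_mul T)).const_mul T)
  · have i12 := (i1.add i2).const_mul T
    have i34 := (i3.add (integrable_const (1 : ℝ))).const_mul T
    have e1 := integral_add i0 ((i12.add i34).const_mul T)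
    refine (le_of_eq e1).trans (add_le_add (le_of_eq b0) ?_)
    rw [integral_const_mul]
    refine mul_le_mul_of_nonneg_left ((le_of_eq (integral_add i12 i34)).trans
      (add_le_add ?_ ?_)) hT0
    · rw [integral_const_mul]
      exact mul_le_mul_of_nonneg_left ((le_of_eq (integral_add i1 i2)).trans
        (add_le_add b1 b2)) hT0
    · rw [integral_const_mul]
      refine mul_le_mul_of_nonneg_left ((le_of_eq (integral_add i3 (integrable_const 1))).trans
        (add_le_add b3 (by simp))) hT0
end

/-! ### The generator bound -/

lemma min_ratio_eq {ρ : ℝ → ℝ} (hpos : ∀ x, 0 < ρ x) {d : ℕ} (x y : Fin d → ℝ) :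
    (∏ i, ρ (y i)) / ∏ i, ρ (x i) = Real.exp (lar (fun t => Real.log (ρ t)) x y) := by
  rw [lar, Real.exp_sum, ← Finset.prod_div_distrib]
  exact Finset.prod_congr rfl fun i _ => by
    rw [Real.exp_sub, Real.exp_log (hpos _), Real.exp_log (hpos _)]

/-- A sluggish sequence is bounded away from zero. -/
lemma Sluggish.exists_lower {a : ℕ → ℝ} (ha : Sluggish a) : ∃ c, 0 < c ∧ ∀ d, c ≤ a d := by
  obtain ⟨N, hN⟩ := eventually_atTop.1 (ha.2.1.eventually_ge_atTop 1)
  obtain ⟨j, hj, hmin⟩ := Finset.exists_min_image (Finset.range (N + 1)) a ⟨0, by simp⟩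
  refine ⟨min 1 (a j), lt_min one_pos (ha.1 j), fun d => ?_⟩
  rcases le_total N d with h | h
  · exact (min_le_left _ _).trans (hN d h)
  · exact (min_le_right _ _).trans (hmin d (by simp; omega))

lemma MemS.deriv_le {f : ℝ → ℝ} (hf : MemS 3 f) {i : ℕ} (hi : i ∈ Finset.Icc 1 3) (t : ℝ) :
    |iteratedDeriv i f t|
      ≤ (∑ i ∈ Finset.Icc 1 3, normIS (iteratedDeriv i f) (1 / 2)) * Real.exp |t| := by
  refine (hf.abs_le (by norm_num : (0 : ℝ) < 1 / 2) (Finset.mem_Icc.1 hi).2 t).trans ?_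
  have h1 := Finset.single_le_sum (f := fun i => normIS (iteratedDeriv i f) (1 / 2))
    (fun i _ => normIS_nonneg _ _) hi
  have h2 : Real.exp (1 / 2 * |t|) ≤ Real.exp |t| :=
    Real.exp_le_exp.2 (by linarith [abs_nonneg t])
  exact mul_le_mul h1 h2 (Real.exp_pos _).le ((normIS_nonneg _ _).trans h1)

/-- **Proposition.** For a sluggish sequence `a` and `p ∈ [1,∞)` there is a constant `C₄` with
`‖G f - G_d f‖_{L^p(ρ_d)} ≤ C₄ (Σ_{i=1}^3 ‖f⁽ⁱ⁾‖_{∞,1/2}) (a_d/√d + e^{-a_d²/p})`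
for every `f ∈ S³` and all `d ∈ ℕ`. -/
theorem stmt2 (ρ : ℝ → ℝ) (hmeas : Measurable ρ) (hpos : ∀ x, 0 < ρ x)
    (hint : ∫ x, ρ x = 1) (hlog : MemS 4 fun x => Real.log (ρ x))
    (htail : SuperExpTails ρ) (l : ℝ) (hl : 0 < l)
    (a : ℕ → ℝ) (ha : Sluggish a) (p : ℝ) (hp : 1 ≤ p) :
    ∃ C₄ : ℝ, ∀ (d : ℕ) [NeZero d], ∀ f : ℝ → ℝ, MemS 3 f →
      (∫ x, |Gop ρ l f (x 0) - Gd ρ l d f x| ^ p ∂(pm ρ d)) ^ ((1:ℝ)/p) ≤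
        C₄ * (∑ i ∈ Finset.Icc 1 3, normIS (iteratedDeriv i f) (1/2)) *
          (a d / Real.sqrt d + Real.exp (-(a d) ^ 2 / p)) := by
  have := isProbabilityMeasure_tgt hpos hint
  obtain ⟨K, hL⟩ := isPot_log hlog
  obtain ⟨hJ, hJ1, hJ2⟩ := fisher hmeas hpos hint hL htail
  obtain ⟨-, m1, m2, -⟩ := hL.meas
  obtain ⟨M, hM⟩ := exists_momBd l hl
  obtain ⟨C, hC, hbound⟩ := gen_bound_min hL hl hJ hM
  have A1 : AllMom (tgt ρ) fun x => dl ρ x ^ 2 - Jc ρ :=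
    allMom_tgt hmeas hpos hL.d0 htail (by fun_prop) (hL.bound_sq _)
  have A2 : AllMom (tgt ρ) fun x => d2l ρ x + Jc ρ :=
    allMom_tgt hmeas hpos hL.d0 htail (by fun_prop) (hL.bound_two _)
  obtain ⟨P, hP⟩ := exists_nat_ge p
  have hP0 : P ≠ 0 := by
    rintro rfl
    norm_num at hP
    linarith
  obtain ⟨D, hD, hmom⟩ := error_moment hl (exp_moment hmeas hpos hL.d0 htail) A1 hJ1 A2 hJ2 P hP0
  obtain ⟨c, hc0, hca⟩ := ha.exists_lower
  have hp0 : 0 < p := by linarith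
  refine ⟨C * D ^ (1 / p) * (l / c), fun d _ f hf => ?_⟩
  have hd : d ≠ 0 := NeZero.ne d
  have hd0 : (0 : ℝ) < d := by exact_mod_cast Nat.pos_of_ne_zero hd
  set F := ∑ i ∈ Finset.Icc 1 3, normIS (iteratedDeriv i f) (1 / 2) with hF
  have hF0 : 0 ≤ F := Finset.sum_nonneg fun i _ => normIS_nonneg _ _
  obtain ⟨f0, f1, f2⟩ := hf.hasDerivAt le_rfl
  have g1 := hf.deriv_le (i := 1) (by simp)
  have g2 := hf.deriv_le (i := 2) (by simp)
  have g3 := hf.deriv_le (i := 3) (by simp)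
  rw [iteratedDeriv_one] at g1
  rw [iteratedDeriv_two'] at g2
  rw [iteratedDeriv_three] at g3
  set v := (l ^ 2 / (d : ℝ)).toNNReal with hv
  have hvd : (v : ℝ) = l ^ 2 / d := Real.coe_toNNReal _ (by positivity)
  have hvpos : (0 : ℝ) < v := by rw [hvd]; positivity
  set s := Real.sqrt v with hs
  have hs0 : 0 < s := Real.sqrt_pos.2 hvpos
  have hss : s ^ 2 = l ^ 2 / d := by rw [← hvd]; exact Real.sq_sqrt hvpos.le
  have hsd : s = l / Real.sqrt d := by
    rw [hs, hvd, Real.sqrt_div (by positivity), Real.sqrt_sq hl.le]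
  obtain ⟨Z, hZ, hZ1, Y, hZY, hYi, hYD⟩ := hmom d 0 s hs0 hss
  have hpt : ∀ x : Fin d → ℝ, |Gop ρ l f (x 0) - Gd ρ l d f x| ≤ C * F * s * Z x := by
    intro x
    have h := hbound d 0 v hvd x f _ _ _ F hF0 f0 f1 f2 g1 g2 g3
    rw [hZ x, ← mul_assoc] at h
    rw [abs_sub_comm]
    refine le_of_eq_of_le ?_ h
    unfold Gd Gop hc
    simp only [min_ratio_eq hpos]
    congr 2
    ring
  have hB0 : 0 ≤ C * F * s := by positivity
  have hpw : ∀ x : Fin d → ℝ, |Gop ρ l f (x 0) - Gd ρ l d f x| ^ p ≤ (C * F * s) ^ p * Y x := by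
    intro x
    have z0 : 0 ≤ Z x := zero_le_one.trans (hZ1 x)
    calc _ ≤ (C * F * s * Z x) ^ p := Real.rpow_le_rpow (abs_nonneg _) (hpt x) hp0.le
      _ = (C * F * s) ^ p * Z x ^ p := Real.mul_rpow hB0 z0
      _ ≤ (C * F * s) ^ p * Y x := by
        refine mul_le_mul_of_nonneg_left (le_trans ?_ (hZY x)) (by positivity)
        rw [← Real.rpow_natCast]
        exact Real.rpow_le_rpow_of_exponent_le (hZ1 x) hP
  have hI : ∫ x, |Gop ρ l f (x 0) - Gd ρ l d f x| ^ p ∂(pm ρ d) ≤ (C * F * s) ^ p * D := by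
    refine (integral_mono_of_nonneg (ae_of_all _ fun x => by positivity)
      (hYi.const_mul ((C * F * s) ^ p)) (ae_of_all _ hpw)).trans ?_
    rw [integral_const_mul]
    exact mul_le_mul_of_nonneg_left hYD (by positivity)
  calc _ ≤ ((C * F * s) ^ p * D) ^ (1 / p) :=
        Real.rpow_le_rpow (integral_nonneg fun x => by positivity) hI (by positivity)
    _ = C * F * s * D ^ (1 / p) := by
        rw [Real.mul_rpow (by positivity) hD, ← Real.rpow_mul hB0, mul_one_div_cancel hp0.ne',
          Real.rpow_one]
    _ ≤ C * F * (l / c * (a d / Real.sqrt d)) * D ^ (1 / p) := by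
        gcongr
        rw [hsd]
        have : l / Real.sqrt d = l / c * (c / Real.sqrt d) := by field_simp
        rw [this]
        gcongr
        exact hca d
    _ = C * D ^ (1 / p) * (l / c) * F * (a d / Real.sqrt d) := by ring
    _ ≤ _ := by
        gcongr
        exact le_add_of_nonneg_right (Real.exp_pos _).le
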